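/- arXiv:1508.05766 — 3 statements merged into one kernel-verified Lean document; each statement's English description precedes it below -/
import Mathlib

section
/- Let n ∈ ℕ, let I be a path instance of length ℓ over a set A, and suppose all constraint relations B_i and B_{i,i+1} of I are preserved by a chain of n Hagemann–Mitschke terms p_0, …, p_n on A. If (s_0, s_1, …, s_n; i_1, …, i_n) is an n-braid in I, then there exists a solution t of I such that t(i_1) = s_0(i_1) and t(i_n) = s_n(i_n). -/
namespace CSPPaper

/-- A relational structure on `A`: a family of finitary relations (the basic
relations), a relation of arity `n` being a set of `n`-tuples `Fin n → A`. -/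
structure RelStruct (A : Type) where
  basic : Set (Σ n : ℕ, Set (Fin n → A))

/-- A CSP instance with variables `V` over domain `A`: a set of constraints,
each consisting of a scope (a tuple of variables) and a constraint relation. -/
structure Instance (A : Type) (V : Type) where
  constraints : Set (Σ n : ℕ, (Fin n → V) × Set (Fin n → A))

/-- `f : V → A` is a solution of the instance `I`. -/
def Instance.Sol {A V : Type} (I : Instance A V) (f : V → A) : Prop :=
  ∀ c ∈ I.constraints, (fun i => f (c.2.1 i)) ∈ c.2.2

def Instance.Satisfiable {A V : Type} (I : Instance A V) : Prop :=
  ∃ f, I.Sol f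

/-- `I` is an instance of `CSP(𝔸)`: all its constraint relations are basic
relations of `𝔸`. -/
def IsCSPInstance {A V : Type} (𝔸 : RelStruct A) (I : Instance A V) : Prop :=
  ∀ c ∈ I.constraints, (⟨c.1, c.2.2⟩ : Σ n : ℕ, Set (Fin n → A)) ∈ 𝔸.basic

/-- An atom of a Datalog rule over the variable set `Fin r`: a predicate
(a relation on `A`) applied to a tuple of variables. -/
structure Atom (A : Type) (r : ℕ) where
  arity : ℕ
  scope : Fin arity → Fin r
  rel : Set (Fin arity → A)

def Atom.holds {A : Type} {r : ℕ} (a : Atom A r) (f : Fin r → A) : Prop :=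
  (fun i => f (a.scope i)) ∈ a.rel

/-- A rule of the `r`-ary maximal symmetric Datalog program `𝒫_𝔸^r` consistent
with `𝔸`: a linear Datalog rule on at most `r` variables, whose head is an IDB
(an arbitrary relation on `A` of arity at most `r`), whose body contains at most
one IDB atom (`idb`) and otherwise non-IDB atoms for basic relations of `𝔸`
of arity at most `r` (`edb`, without repetition), such that the rule is
consistent with `𝔸`, and, if the body contains an IDB atom, its mirror image is
also consistent with `𝔸`. -/
structure Rule (A : Type) (𝔸 : RelStruct A) (r : ℕ) where
  head : Atom A r
  idb : Option (Atom A r)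
  edb : List (Atom A r)
  head_arity : head.arity ≤ r
  idb_arity : ∀ a ∈ idb, a.arity ≤ r
  edb_arity : ∀ a ∈ edb, a.arity ≤ r
  edb_basic : ∀ a ∈ edb, (⟨a.arity, a.rel⟩ : Σ n : ℕ, Set (Fin n → A)) ∈ 𝔸.basic
  nodup : edb.Nodup
  consistent : ∀ f : Fin r → A,
    (∀ a ∈ idb, a.holds f) → (∀ a ∈ edb, a.holds f) → head.holds f
  mirror : ∀ a ∈ idb, ∀ f : Fin r → A,
    head.holds f → (∀ b ∈ edb, b.holds f) → a.holds f

/-- `Derives 𝔸 r I ρ R`: the `r`-ary maximal symmetric Datalog program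
`𝒫_𝔸^r` consistent with `𝔸`, run on the instance `I`, derives `R(ρ)`.
This holds if `(ρ, R)` is a constraint of `I`, or if some rule of `𝒫_𝔸^r`
with head `R(τ)` admits an evaluation `ω` of its variables into `V` with
`ω ∘ τ = ρ`, whose (at most one) IDB body atom is derived and whose non-IDB
body atoms are constraints of `I` under `ω`. -/
inductive Derives {A V : Type} (𝔸 : RelStruct A) (r : ℕ) (I : Instance A V) :
    ∀ {n : ℕ}, (Fin n → V) → Set (Fin n → A) → Prop
  | base {n : ℕ} (ρ : Fin n → V) (R : Set (Fin n → A)) :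
      (⟨n, ρ, R⟩ : Σ n : ℕ, (Fin n → V) × Set (Fin n → A)) ∈ I.constraints →
      Derives 𝔸 r I ρ R
  | step (rule : Rule A 𝔸 r) (ω : Fin r → V) :
      (∀ a ∈ rule.idb, Derives 𝔸 r I (fun i => ω (a.scope i)) a.rel) →
      (∀ a ∈ rule.edb,
        (⟨a.arity, fun i => ω (a.scope i), a.rel⟩ :
          Σ n : ℕ, (Fin n → V) × Set (Fin n → A)) ∈ I.constraints) →
      Derives 𝔸 r I (fun i => ω (rule.head.scope i)) rule.head.rel

/-- `𝒫_𝔸^r(I) ⊢ G`: the program derives a goal predicate, i.e. an empty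
relation of arity at most `r`. -/
def DerivesGoal {A V : Type} (𝔸 : RelStruct A) (r : ℕ) (I : Instance A V) : Prop :=
  ∃ (n : ℕ) (ρ : Fin n → V), n ≤ r ∧ Derives 𝔸 r I ρ (∅ : Set (Fin n → A))

/-- `𝒫_𝔸^r(I) ⊢ J`: the program run on `I` derives every constraint of `J`. -/
def DerivesInstance {A V : Type} (𝔸 : RelStruct A) (r : ℕ) (I J : Instance A V) : Prop :=
  ∀ c ∈ J.constraints, Derives 𝔸 r I c.2.1 c.2.2

/-- An `m`-ary operation `t` preserves the `n`-ary relation `R`. -/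
def PreservesRel {A : Type} {m n : ℕ} (t : (Fin m → A) → A) (R : Set (Fin n → A)) : Prop :=
  ∀ rows : Fin m → Fin n → A, (∀ j, rows j ∈ R) → (fun i => t (fun j => rows j i)) ∈ R

/-- A polymorphism of `𝔸`: an operation preserving all basic relations. -/
def IsPolymorphism {A : Type} {m : ℕ} (𝔸 : RelStruct A) (t : (Fin m → A) → A) : Prop :=
  ∀ R ∈ 𝔸.basic, PreservesRel t R.2

def ternaryOp {A : Type} (p : A → A → A → A) : (Fin 3 → A) → A :=
  fun v => p (v 0) (v 1) (v 2)

/-- A chain of `n` Hagemann–Mitschke terms: idempotent ternary operations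
`p 0, …, p n` with `p 0 x y z = x`, `p k x x y = p (k+1) x y y`, `p n x y z = z`. -/
def IsHMChain {A : Type} (n : ℕ) (p : ℕ → A → A → A → A) : Prop :=
  (∀ k ≤ n, ∀ x : A, p k x x x = x) ∧
  (∀ x y z : A, p 0 x y z = x) ∧
  (∀ x y z : A, p n x y z = z) ∧
  (∀ k < n, ∀ x y : A, p k x x y = p (k + 1) x y y)

def Pres3Set {A : Type} (p : A → A → A → A) (S : Set A) : Prop :=
  ∀ x y z, x ∈ S → y ∈ S → z ∈ S → p x y z ∈ S

def Pres3Rel {A : Type} (p : A → A → A → A) (E : Set (A × A)) : Prop :=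
  ∀ u v w, u ∈ E → v ∈ E → w ∈ E → (p u.1 v.1 w.1, p u.2 v.2 w.2) ∈ E

def PresOpSet {A : Type} {m : ℕ} (t : (Fin m → A) → A) (S : Set A) : Prop :=
  ∀ x : Fin m → A, (∀ j, x j ∈ S) → t x ∈ S

def PresOpRel {A : Type} {m : ℕ} (t : (Fin m → A) → A) (E : Set (A × A)) : Prop :=
  ∀ x y : Fin m → A, (∀ j, (x j, y j) ∈ E) → (t x, t y) ∈ E

/-- A path instance of length `len`: variables `1, …, len`, one unary
constraint `B i` on each variable `i ∈ [1, len]`, and one binary constraint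
`E i` with scope `(i, i+1)` for each `i ∈ [1, len-1]`. -/
structure PathInstance (A : Type) where
  len : ℕ
  B : ℕ → Set A
  E : ℕ → Set (A × A)

/-- A solution of the subinstance of the path instance `I` induced by `[a, b]`. -/
def IsSolutionOn {A : Type} (I : PathInstance A) (a b : ℕ) (s : ℕ → A) : Prop :=
  (∀ i, a ≤ i → i ≤ b → s i ∈ I.B i) ∧
  (∀ i, a ≤ i → i + 1 ≤ b → (s i, s (i + 1)) ∈ I.E i)

def IsSolution {A : Type} (I : PathInstance A) (s : ℕ → A) : Prop :=
  IsSolutionOn I 1 I.len s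

def unaryRel {A : Type} (S : Set A) : Set (Fin 1 → A) := {f | f 0 ∈ S}

def pairRel {A : Type} (E : Set (A × A)) : Set (Fin 2 → A) := {f | (f 0, f 1) ∈ E}

/-- The path instance `I`, presented as a CSP instance on the variable set `ℕ`. -/
def PathInstance.toInstance {A : Type} (I : PathInstance A) : Instance A ℕ where
  constraints :=
    {c | (∃ i, 1 ≤ i ∧ i ≤ I.len ∧
            c = ⟨1, fun _ => i, unaryRel (I.B i)⟩) ∨
         (∃ i, 1 ≤ i ∧ i + 1 ≤ I.len ∧
            c = ⟨2, ![i, i + 1], pairRel (I.E i)⟩)}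

/-- An `n`-braid in the path instance `I`: solutions `s 0, …, s n` and indices
`1 ≤ idx 1 < … < idx n ≤ I.len` with `s k (idx k) = s (k+1) (idx k)` and
`s (k-1) (idx (k+1)) = s k (idx (k+1))` for `k = 1, …, n-1`. -/
def IsBraid {A : Type} (I : PathInstance A) (n : ℕ) (s : ℕ → ℕ → A) (idx : ℕ → ℕ) : Prop :=
  (∀ k ≤ n, IsSolution I (s k)) ∧
  1 ≤ idx 1 ∧ idx n ≤ I.len ∧
  (∀ k, 1 ≤ k → k < n → idx k < idx (k + 1)) ∧
  (∀ k, 1 ≤ k → k + 1 ≤ n →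
    s k (idx k) = s (k + 1) (idx k) ∧ s (k - 1) (idx (k + 1)) = s k (idx (k + 1)))

/-- The binary constraint of `I` with scope `(i, i+1)` is subdirect. -/
def SubdirectAt {A : Type} (I : PathInstance A) (i : ℕ) : Prop :=
  (I.B i).Nonempty ∧ (I.B (i + 1)).Nonempty ∧
  (∀ a ∈ I.B i, ∃ b ∈ I.B (i + 1), (a, b) ∈ I.E i) ∧
  (∀ b ∈ I.B (i + 1), ∃ a ∈ I.B i, (a, b) ∈ I.E i)

/-- The subinstance of `I` induced by `[a, b]` is subdirect. -/
def SubdirectOn {A : Type} (I : PathInstance A) (a b : ℕ) : Prop :=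
  ∀ i, a ≤ i → i + 1 ≤ b → SubdirectAt I i

def Subdirect {A : Type} (I : PathInstance A) : Prop := SubdirectOn I 1 I.len

/-- The sets `C_i`: `C 1 = B 1` and
`C (i+1) = {b ∈ B (i+1) | ∃ c ∈ C i, (c, b) ∈ E i}`. -/
def reachSet {A : Type} (I : PathInstance A) : ℕ → Set A
  | 0 => ∅
  | 1 => I.B 1
  | (i + 2) => {b ∈ I.B (i + 2) | ∃ c ∈ reachSet I (i + 1), (c, b) ∈ I.E (i + 1)}

/-- `B_{i,i+1}` contains a backward edge: an edge `(b, c) ∈ E i` with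
`b ∈ B i \ C i` and `c ∈ C (i+1)`. -/
def BackwardAt {A : Type} (I : PathInstance A) (i : ℕ) : Prop :=
  1 ≤ i ∧ i + 1 ≤ I.len ∧
  ∃ b c, (b, c) ∈ I.E i ∧ b ∈ I.B i ∧ b ∉ reachSet I i ∧ c ∈ reachSet I (i + 1)

/-- Adjacency in the graph `Conn(I_{[lo,hi]})`: its vertices are pairs `(i, a)`
with `a ∈ B i`, `lo ≤ i ≤ hi`, and `(i, a)` is adjacent to `(i+1, b)` whenever
`(a, b) ∈ E i`. -/
def connAdj {A : Type} (I : PathInstance A) (lo hi : ℕ) (p q : ℕ × A) : Prop :=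
  lo ≤ p.1 ∧ p.1 + 1 ≤ hi ∧ q.1 = p.1 + 1 ∧
  p.2 ∈ I.B p.1 ∧ q.2 ∈ I.B q.1 ∧ (p.2, q.2) ∈ I.E p.1

/-- `λ_{I,lo,hi}`: the pairs `(a, b) ∈ B lo × B hi` joined by an undirected path
in `Conn(I_{[lo,hi]})`. -/
def lamRel {A : Type} (I : PathInstance A) (lo hi : ℕ) : Set (A × A) :=
  {ab | ab.1 ∈ I.B lo ∧ ab.2 ∈ I.B hi ∧
    Relation.ReflTransGen (fun p q => connAdj I lo hi p q ∨ connAdj I lo hi q p)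
      (lo, ab.1) (hi, ab.2)}

open Classical in
/-- The variable set `U` of the instance `I_λ`: the variables `1`, `len`, and
`i, i+1` for every index `i` such that `B_{i,i+1}` has a backward edge. -/
noncomputable def lamVars {A : Type} (I : PathInstance A) : Finset ℕ :=
  (Finset.Icc 1 I.len).filter
    (fun v => v = 1 ∨ v = I.len ∨ BackwardAt I v ∨ (2 ≤ v ∧ BackwardAt I (v - 1)))

/-- The `t`-th smallest element of `U` (`1`-indexed). -/
noncomputable def lamEnum {A : Type} (I : PathInstance A) (t : ℕ) : ℕ :=
  ((lamVars I).sort (· ≤ ·)).getD (t - 1) 0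

/-- The instance `I_λ`, presented as a path instance whose `t`-th variable is
the `t`-th smallest element of `U`: it consists of the subinstance of `I`
induced by `U`, where each gap between consecutive elements `u < w` of `U` with
`w > u + 1` is filled by the binary constraint `λ_{I,u,w}`. -/
noncomputable def lamInst {A : Type} (I : PathInstance A) : PathInstance A where
  len := (lamVars I).card
  B := fun t => I.B (lamEnum I t)
  E := fun t =>
    if lamEnum I (t + 1) = lamEnum I t + 1 then I.E (lamEnum I t)
    else lamRel I (lamEnum I t) (lamEnum I (t + 1))

/-- Unpacking an `m`-tuple of elements of `V^k` into an `m*k`-tuple of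
elements of `V`. -/
def unpackTuple {X : Type} {m k : ℕ} (σ : Fin m → Fin k → X) : Fin (m * k) → X :=
  fun t => σ t.divNat t.modNat

/-- Unpacking an `m`-ary relation on `A^k` into an `m*k`-ary relation on `A`. -/
def unpackRel {A : Type} {m k : ℕ} (U : Set (Fin m → Fin k → A)) :
    Set (Fin (m * k) → A) :=
  {t | ∃ u ∈ U, ∀ i : Fin (m * k), t i = u i.divNat i.modNat}

/-- The instance `I` has pathwidth at most `p`. -/
def PathwidthLE {A V : Type} (I : Instance A V) (p : ℕ) : Prop :=
  ∃ (m : ℕ) (U : Fin m → Set V),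
    (∀ v : V, ∃ i, v ∈ U i) ∧
    (∀ i, (U i).Finite ∧ (U i).ncard ≤ p + 1) ∧
    (∀ i j q : Fin m, i ≤ q → q ≤ j → ∀ v, v ∈ U i → v ∈ U j → v ∈ U q) ∧
    (∀ c ∈ I.constraints, ∃ i, Set.range c.2.1 ⊆ U i)

/-- `𝔸` has pathwidth duality `p`: for every unsatisfiable instance `I` of
`CSP(𝔸)` there is an unsatisfiable instance `J` of `CSP(𝔸)` of pathwidth at
most `p` such that identifying some variables of `J` (along `h`) yields a
subinstance of `I`. -/
def HasPathwidthDuality {A : Type} (𝔸 : RelStruct A) (p : ℕ) : Prop :=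
  ∀ (V : Type) (I : Instance A V), IsCSPInstance 𝔸 I → ¬I.Satisfiable →
    ∃ (W : Type) (J : Instance A W) (h : W → V),
      IsCSPInstance 𝔸 J ∧ ¬J.Satisfiable ∧ PathwidthLE J p ∧
      ∀ c ∈ J.constraints,
        (⟨c.1, fun i => h (c.2.1 i), c.2.2⟩ :
          Σ n : ℕ, (Fin n → V) × Set (Fin n → A)) ∈ I.constraints

/-- The `k`-th bubble power `𝔸^(k)` of `𝔸`: the relational structure on `A^k`
whose basic relations are all unary relations definable as conjunctions of
basic relations of `𝔸` (with identification of variables and dummy variables,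
but no existential quantification), and all binary relations
`E_ℐ = {(a, b) | ∀ (i,j) ∈ ℐ, a i = b j}` for `ℐ ⊆ [k]²`. -/
def bubblePower {A : Type} (𝔸 : RelStruct A) (k : ℕ) : RelStruct (Fin k → A) where
  basic :=
    {r | (∃ L : Set (Σ n : ℕ, (Fin n → Fin k) × Set (Fin n → A)),
            (∀ c ∈ L, (⟨c.1, c.2.2⟩ : Σ n : ℕ, Set (Fin n → A)) ∈ 𝔸.basic) ∧
            r = ⟨1, {f : Fin 1 → (Fin k → A) |
                      ∀ c ∈ L, (fun i => f 0 (c.2.1 i)) ∈ c.2.2}⟩) ∨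
         (∃ Idx : Set (Fin k × Fin k),
            r = ⟨2, {f : Fin 2 → (Fin k → A) | ∀ q ∈ Idx, f 0 q.1 = f 1 q.2}⟩)}

/-! Put `T_k = p_k(s_{k-1}, s_k, s_{k+1})`; in particular `T_0 = s_0` and `T_n = s_n`. At `i_{k+1}`
the braid condition gives `s_{k-1} = s_k` and `s_{k+1} = s_{k+2}`, so there
`T_k = p_k(s_k, s_k, s_{k+1}) = p_{k+1}(s_k, s_{k+1}, s_{k+1}) = T_{k+1}`. Two solutions of a path
instance which agree at a variable can be spliced there, so one may follow `T_0` up to `i_1`, then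
`T_1` up to `i_2`, and so on until `T_n`. -/

section Splicing

theorem exists_eqOn_Iic_eqOn_Ici {α β : Type*} [LinearOrder α] {f g : α → β} {j : α}
    (h : f j = g j) : ∃ t : α → β, Set.EqOn t f (Set.Iic j) ∧ Set.EqOn t g (Set.Ici j) := by
  refine ⟨fun i => if i ≤ j then f i else g i, fun i hi => if_pos hi, fun i hi => ?_⟩
  rcases (Set.mem_Ici.mp hi).eq_or_lt with rfl | hlt
  · exact (if_pos le_rfl).trans h
  · exact if_neg hlt.not_ge

variable {A : Type} {I : PathInstance A} {a b : ℕ}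

theorem IsSolutionOn.of_eqOn {f g t : ℕ → A} {j : ℕ} (hf : IsSolutionOn I a b f)
    (hg : IsSolutionOn I a b g) (htf : Set.EqOn t f (Set.Iic j))
    (htg : Set.EqOn t g (Set.Ici j)) : IsSolutionOn I a b t := by
  refine ⟨fun i hai hib => ?_, fun i hai hib => ?_⟩
  · rcases le_total i j with hij | hji
    · exact htf hij ▸ hf.1 i hai hib
    · exact htg hji ▸ hg.1 i hai hib
  · rcases lt_or_ge i j with hij | hji
    · rw [htf hij.le, htf (Nat.succ_le_of_lt hij)]
      exact hf.2 i hai hib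
    · rw [htg hji, htg (Nat.le_succ_of_le hji)]
      exact hg.2 i hai hib

theorem exists_isSolutionOn_eqOn_of_chain {T : ℕ → ℕ → A} {j : ℕ → ℕ} {n : ℕ} (hn : 1 ≤ n)
    (hT : ∀ k ≤ n, IsSolutionOn I a b (T k)) (hj : MonotoneOn j (Set.Icc 1 n))
    (hagree : ∀ k < n, T k (j (k + 1)) = T (k + 1) (j (k + 1))) :
    ∃ t, IsSolutionOn I a b t ∧
      Set.EqOn t (T 0) (Set.Iic (j 1)) ∧ Set.EqOn t (T n) (Set.Ici (j n)) := by
  induction n, hn using Nat.le_induction with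
  | base =>
    obtain ⟨t, ht₀, ht₁⟩ := exists_eqOn_Iic_eqOn_Ici (hagree 0 one_pos)
    exact ⟨t, (hT 0 zero_le_one).of_eqOn (hT 1 le_rfl) ht₀ ht₁, ht₀, ht₁⟩
  | succ n hn ih =>
    obtain ⟨u, hu, hu₀, hun⟩ := ih (fun k hk => hT k (Nat.le_succ_of_le hk))
      (hj.mono (Set.Icc_subset_Icc_right n.le_succ))
      (fun k hk => hagree k (hk.trans n.lt_succ_self))
    have hj_first : j 1 ≤ j (n + 1) := hj (by simp) (by simp) (by omega)
    have hj_last : j n ≤ j (n + 1) := hj ⟨hn, n.le_succ⟩ (by simp) n.le_succ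
    have hu_agree : u (j (n + 1)) = T (n + 1) (j (n + 1)) :=
      (hun hj_last).trans (hagree n n.lt_succ_self)
    obtain ⟨t, htu, htT⟩ := exists_eqOn_Iic_eqOn_Ici hu_agree
    exact ⟨t, hu.of_eqOn (hT (n + 1) le_rfl) htu htT,
      (htu.mono (Set.Iic_subset_Iic.mpr hj_first)).trans hu₀, htT⟩

end Splicing

theorem IsSolutionOn.map₃ {A : Type} {I : PathInstance A} {a b : ℕ} {q : A → A → A → A}
    {f g h : ℕ → A} (hB : ∀ i, a ≤ i → i ≤ b → Pres3Set q (I.B i))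
    (hE : ∀ i, a ≤ i → i + 1 ≤ b → Pres3Rel q (I.E i)) (hf : IsSolutionOn I a b f)
    (hg : IsSolutionOn I a b g) (hh : IsSolutionOn I a b h) :
    IsSolutionOn I a b (fun i => q (f i) (g i) (h i)) :=
  ⟨fun i hai hib => hB i hai hib _ _ _ (hf.1 i hai hib) (hg.1 i hai hib) (hh.1 i hai hib),
    fun i hai hib => hE i hai hib _ _ _ (hf.2 i hai hib) (hg.2 i hai hib) (hh.2 i hai hib)⟩

section Braid

variable {A : Type} {I : PathInstance A} {n k : ℕ} {p : ℕ → A → A → A → A} {s : ℕ → ℕ → A}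
  {idx : ℕ → ℕ}

theorem IsBraid.monotoneOn_idx (h : IsBraid I n s idx) : MonotoneOn idx (Set.Icc 1 n) :=
  monotoneOn_of_le_succ Set.ordConnected_Icc fun k _ hk hk' => (h.2.2.2.1 k hk.1 hk'.2).le

theorem IsBraid.strand_pred_eq (h : IsBraid I n s idx) (hk : k < n) :
    s (k - 1) (idx (k + 1)) = s k (idx (k + 1)) := by
  rcases k.eq_zero_or_pos with rfl | hpos
  · rfl
  · exact (h.2.2.2.2 k hpos hk).2

theorem IsBraid.strand_succ_eq (h : IsBraid I n s idx) (hk : 1 ≤ k) (hkn : k ≤ n) :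
    s (min (k + 1) n) (idx k) = s k (idx k) := by
  rcases hkn.eq_or_lt with rfl | hlt
  · rw [min_eq_right k.le_succ]
  · rw [min_eq_left hlt]
    exact (h.2.2.2.2 k hk hlt).1.symm

/-- The `k`-th zigzag strand `p_k(s_{k-1}, s_k, s_{k+1})` of a sequence `s_0, …, s_n`, the building
block of the solution running along a braid. The indices are clamped to `[0, n]`: subtraction
truncates `k - 1` at `0`, and the minimum caps `k + 1` at `n`. -/
def zigzagStrand (n : ℕ) (p : ℕ → A → A → A → A) (s : ℕ → ℕ → A) (k i : ℕ) : A :=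
  p k (s (k - 1) i) (s k i) (s (min (k + 1) n) i)

theorem IsHMChain.zigzagStrand_zero (hp : IsHMChain n p) : zigzagStrand n p s 0 = s 0 :=
  funext fun _ => hp.2.1 _ _ _

theorem IsHMChain.zigzagStrand_last (hp : IsHMChain n p) : zigzagStrand n p s n = s n := by
  funext i
  rw [zigzagStrand, hp.2.2.1, min_eq_right n.le_succ]

theorem isSolutionOn_zigzagStrand {a b : ℕ} (hs : ∀ k ≤ n, IsSolutionOn I a b (s k)) (hk : k ≤ n)
    (hB : ∀ i, a ≤ i → i ≤ b → Pres3Set (p k) (I.B i))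
    (hE : ∀ i, a ≤ i → i + 1 ≤ b → Pres3Rel (p k) (I.E i)) :
    IsSolutionOn I a b (zigzagStrand n p s k) :=
  .map₃ hB hE (hs _ ((Nat.sub_le k 1).trans hk)) (hs _ hk) (hs _ (min_le_right _ _))

theorem IsBraid.zigzagStrand_eq_succ (h : IsBraid I n s idx) (hp : IsHMChain n p) (hk : k < n) :
    zigzagStrand n p s k (idx (k + 1)) = zigzagStrand n p s (k + 1) (idx (k + 1)) := by
  set i := idx (k + 1)
  calc
    zigzagStrand n p s k i = p k (s k i) (s k i) (s (k + 1) i) := by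
      rw [zigzagStrand, h.strand_pred_eq hk, min_eq_left (Nat.succ_le_of_lt hk)]
    _ = p (k + 1) (s k i) (s (k + 1) i) (s (k + 1) i) := hp.2.2.2 k hk _ _
    _ = zigzagStrand n p s (k + 1) i := by
      rw [zigzagStrand, h.strand_succ_eq k.succ_pos hk, Nat.add_sub_cancel]

end Braid

/-- zigzag through a braid; Freese–Valeriote.
Let `I` be a path instance whose constraint relations are preserved by a chain
of `n` Hagemann–Mitschke terms, and let `(s_0, …, s_n; i_1, …, i_n)` be an
`n`-braid in `I`. Then there is a solution `t` of `I` with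
`t (i_1) = s_0 (i_1)` and `t (i_n) = s_n (i_n)`. -/
theorem statement5 {A : Type} (n : ℕ) (hn : 1 ≤ n) (I : PathInstance A)
    (p : ℕ → A → A → A → A) (hp : IsHMChain n p)
    (hB : ∀ k ≤ n, ∀ i, 1 ≤ i → i ≤ I.len → Pres3Set (p k) (I.B i))
    (hE : ∀ k ≤ n, ∀ i, 1 ≤ i → i + 1 ≤ I.len → Pres3Rel (p k) (I.E i))
    (s : ℕ → ℕ → A) (idx : ℕ → ℕ)
    (hbraid : IsBraid I n s idx) :
    ∃ t : ℕ → A, IsSolution I t ∧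
      t (idx 1) = s 0 (idx 1) ∧ t (idx n) = s n (idx n) := by
  obtain ⟨t, ht, ht_first, ht_last⟩ := exists_isSolutionOn_eqOn_of_chain hn
    (fun k hk => isSolutionOn_zigzagStrand hbraid.1 hk (hB k hk) (hE k hk)) hbraid.monotoneOn_idx
    (fun k hk => hbraid.zigzagStrand_eq_succ hp hk)
  rw [hp.zigzagStrand_zero] at ht_first
  rw [hp.zigzagStrand_last] at ht_last
  exact ⟨t, ht, ht_first Set.self_mem_Iic, ht_last Set.self_mem_Ici⟩

end CSPPaper
end

section
/- Let 𝔸 be a relational structure and let I be an unsatisfiable path instance of CSP(𝔸). Then 𝒫_𝔸^3 derives from I the instance I_λ; I_λ is an unsatisfiable path instance; for every m, any interval of variables of I_λ of length at least 2m+2 contains at least m indices with backward edges; and all constraint relations of I_λ are invariant under all polymorphisms of 𝔸. -/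
namespace CSPPaper

/-!
Every element of `C_i` is linked to an element of `C_1`, and as long as no index carries a backward
edge, an undirected path in `Conn(I)` starting inside the sets `C_i` stays inside them. So replacing
each stretch without backward edges by `λ` leaves the sets `C_i` unchanged on the surviving
variables, and a path instance is satisfiable iff its last `C_i` is nonempty.

The delicate point is that `λ_{I,lo,hi}` is invariant under polymorphisms: an operation is applied
to several paths at once, and these paths zigzag differently. Induct on `hi - lo`. A path from level
`lo` to level `h + 1` alternates between climbing to `h + 1` for the first time (`F`) and descending
to `lo` for the first time (the inverse of `L`, the climbs that leave `lo` for the last time), so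
`λ_{I,lo,h+1} = ⋃ₙ F ○ (L⁻¹ ○ F)ⁿ ○ L⁻¹ ○ L`. Both `F` and `L` are invariant by induction, and the
union is increasing because `L⁻¹ ○ F` is reflexive on the elements reached by `F`: several paths can
be padded to the same number of alternations.
-/

section Constraints
variable {A : Type} {I : PathInstance A} {k : ℕ}

theorem unary_mem_constraints (hk : 1 ≤ k) (hk' : k ≤ I.len) :
    (⟨1, fun _ => k, unaryRel (I.B k)⟩ : Σ n : ℕ, (Fin n → ℕ) × Set (Fin n → A)) ∈
      I.toInstance.constraints :=
  Or.inl ⟨k, hk, hk', rfl⟩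

theorem pair_mem_constraints (hk : 1 ≤ k) (hk' : k + 1 ≤ I.len) :
    (⟨2, ![k, k + 1], pairRel (I.E k)⟩ : Σ n : ℕ, (Fin n → ℕ) × Set (Fin n → A)) ∈
      I.toInstance.constraints :=
  Or.inr ⟨k, hk, hk', rfl⟩

end Constraints

section Preservation

open scoped SetRel

variable {A : Type} {q : ℕ} {t : (Fin q → A) → A}

theorem PresOpRel.inv {R : SetRel A A} (hR : PresOpRel t R) : PresOpRel t R.inv :=
  fun x y hxy => hR y x hxy

theorem PresOpRel.comp {R S : SetRel A A} (hR : PresOpRel t R) (hS : PresOpRel t S) :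
    PresOpRel t (R ○ S) := by
  intro x z hxz
  choose y hxy hyz using hxz
  exact ⟨t y, hR x y hxy, hS y z hyz⟩

theorem PresOpRel.iUnion_of_directed {ι : Type*} [Nonempty ι] {R : ι → SetRel A A}
    (hdir : Directed (· ⊆ ·) R) (hR : ∀ i, PresOpRel t (R i)) : PresOpRel t (⋃ i, R i) := by
  classical
  intro x y hxy
  choose i hi using fun j => Set.mem_iUnion.mp (hxy j)
  obtain ⟨k, hk⟩ := hdir.finset_le (Finset.univ.image i)
  exact Set.mem_iUnion.mpr
    ⟨k, hR k x y fun j => hk _ (Finset.mem_image_of_mem i (Finset.mem_univ j)) (hi j)⟩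

theorem IsPolymorphism.presOpSet_B {𝔸 : RelStruct A} {I : PathInstance A}
    (ht : IsPolymorphism 𝔸 t) (hI : IsCSPInstance 𝔸 I.toInstance) {k : ℕ} (hk : 1 ≤ k)
    (hk' : k ≤ I.len) : PresOpSet t (I.B k) :=
  fun x hx => ht _ (hI _ (unary_mem_constraints hk hk')) (fun j _ => x j) hx

theorem IsPolymorphism.presOpRel_E {𝔸 : RelStruct A} {I : PathInstance A}
    (ht : IsPolymorphism 𝔸 t) (hI : IsCSPInstance 𝔸 I.toInstance) {k : ℕ} (hk : 1 ≤ k)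
    (hk' : k + 1 ≤ I.len) : PresOpRel t (I.E k) :=
  fun x y hxy => ht _ (hI _ (pair_mem_constraints hk hk')) (fun j => ![x j, y j]) hxy

end Preservation

section Linked

variable {A : Type} {I : PathInstance A} {lo hi : ℕ} {p q r : ℕ × A}

/-- The edge relation `B_{k,k+1}` cut down to `B_k × B_{k+1}`, i.e. the edges of `Conn(I)` between
levels `k` and `k + 1`. -/
def edgeRel (I : PathInstance A) (k : ℕ) : SetRel A A :=
  {ab | ab.1 ∈ I.B k ∧ ab.2 ∈ I.B (k + 1) ∧ ab ∈ I.E k}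

/-- Two vertices are linked if an undirected path of `Conn(I_{[lo,hi]})` joins them. Every pair
`p : ℕ × A` is linked to itself, whether or not it is a vertex of that graph. -/
def Linked (I : PathInstance A) (lo hi : ℕ) : ℕ × A → ℕ × A → Prop :=
  Relation.ReflTransGen (Relation.SymmGen (connAdj I lo hi))

theorem mem_lamRel {a b : A} :
    (a, b) ∈ lamRel I lo hi ↔ a ∈ I.B lo ∧ b ∈ I.B hi ∧ Linked I lo hi (lo, a) (hi, b) :=
  Iff.rfl

theorem Linked.symm (h : Linked I lo hi p q) : Linked I lo hi q p :=
  Relation.ReflTransGen.stdSymm.symm _ _ h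

theorem Linked.trans (hpq : Linked I lo hi p q) (hqr : Linked I lo hi q r) : Linked I lo hi p r :=
  Relation.ReflTransGen.trans hpq hqr

theorem Linked.mono {lo' hi' : ℕ} (hlo : lo' ≤ lo) (hhi : hi ≤ hi') (h : Linked I lo hi p q) :
    Linked I lo' hi' p q := by
  have connAdj_mono (u v : ℕ × A) (huv : connAdj I lo hi u v) : connAdj I lo' hi' u v :=
    ⟨hlo.trans huv.1, huv.2.1.trans hhi, huv.2.2⟩
  exact Relation.ReflTransGen.mono
    (fun u v huv => huv.imp (connAdj_mono u v) (connAdj_mono v u)) _ _ h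

theorem Linked.of_edge {k : ℕ} (hlo : lo ≤ k) (hhi : k + 1 ≤ hi) {a b : A}
    (hab : (a, b) ∈ edgeRel I k) : Linked I lo hi (k, a) (k + 1, b) :=
  .single (.of_rel ⟨hlo, hhi, rfl, hab⟩)

theorem le_fst_of_symmGen_connAdj (h : Relation.SymmGen (connAdj I lo hi) p q) : lo ≤ q.1 := by
  rcases h with ⟨_, _, _, _⟩ | ⟨_, _, _, _⟩ <;> omega

theorem snd_mem_of_symmGen_connAdj (h : Relation.SymmGen (connAdj I lo hi) p q) :
    q.2 ∈ I.B q.1 := by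
  rcases h with ⟨_, _, _, _, hq, _⟩ | ⟨_, _, _, hq, _, _⟩ <;> exact hq

theorem symmGen_connAdj_succ_left (h : Relation.SymmGen (connAdj I lo hi) p q) (hp : lo < p.1)
    (hq : lo < q.1) : Relation.SymmGen (connAdj I (lo + 1) hi) p q :=
  h.imp (fun hpq => ⟨hp, hpq.2⟩) fun hqp => ⟨hq, hqp.2⟩

theorem symmGen_connAdj_of_succ_right (h : Relation.SymmGen (connAdj I lo (hi + 1)) p q)
    (hp : p.1 ≤ hi) (hq : q.1 ≤ hi) : Relation.SymmGen (connAdj I lo hi) p q := by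
  rcases h with ⟨hlo, _, hlevel, hedge⟩ | ⟨hlo, _, hlevel, hedge⟩
  · exact .inl ⟨hlo, hlevel ▸ hq, hlevel, hedge⟩
  · exact .inr ⟨hlo, hlevel ▸ hp, hlevel, hedge⟩

theorem exists_edgeRel_of_fst_lt (h : Relation.SymmGen (connAdj I lo hi) p q) (hpq : p.1 < q.1) :
    q.1 = p.1 + 1 ∧ (p.2, q.2) ∈ edgeRel I p.1 := by
  obtain ⟨k, a⟩ := p
  obtain ⟨l, b⟩ := q
  rcases h with ⟨_, _, rfl, hab⟩ | ⟨_, _, rfl, _⟩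
  · exact ⟨rfl, hab⟩
  · dsimp only at hpq
    omega

theorem Linked.le_fst (h : Linked I lo hi p q) (hp : lo ≤ p.1) : lo ≤ q.1 := by
  induction h with
  | refl => exact hp
  | tail _ hstep _ => exact le_fst_of_symmGen_connAdj hstep

theorem lamRel_self (I : PathInstance A) (lo : ℕ) :
    lamRel I lo lo = {ab | ab.1 ∈ I.B lo ∧ ab.1 = ab.2} := by
  ext ⟨a, b⟩
  rw [mem_lamRel]
  constructor
  · rintro ⟨ha, -, hab⟩
    rcases Relation.ReflTransGen.cases_head hab with h | ⟨_, ⟨_, _, _⟩ | ⟨_, _, _⟩, _⟩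
    · exact ⟨ha, congrArg Prod.snd h⟩
    all_goals omega
  · rintro ⟨ha, rfl : a = b⟩
    exact ⟨ha, ha, .refl⟩

end Linked

section Zigzag

open scoped SetRel

variable {A : Type} {I : PathInstance A} {lo h : ℕ} {x z : A}

/-- The relation `F` of the header: the links from level `lo` to level `h + 1` that reach level
`h + 1` only in their last step. -/
def firstHit (I : PathInstance A) (lo h : ℕ) : SetRel A A :=
  lamRel I lo h ○ edgeRel I h

/-- The relation `L` of the header: the links from level `lo` to level `h + 1` that leave level
`lo` in their first step and never return. -/
def lastExit (I : PathInstance A) (lo h : ℕ) : SetRel A A :=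
  edgeRel I lo ○ lamRel I (lo + 1) (h + 1)

/-- The relation `F ○ (L⁻¹ ○ F)ⁿ` of the header: the links from level `lo` to level `h + 1` that
descend to level `lo` and climb back `n` times. -/
def zigzag (I : PathInstance A) (lo h : ℕ) : ℕ → SetRel A A
  | 0 => firstHit I lo h
  | n + 1 => zigzag I lo h n ○ (lastExit I lo h).inv ○ firstHit I lo h

theorem firstHit_subset_lamRel (hlh : lo ≤ h) : firstHit I lo h ⊆ lamRel I lo (h + 1) := by
  rintro ⟨x, z⟩ ⟨y, hxy, hyz⟩
  obtain ⟨hx, -, hxy⟩ := mem_lamRel.mp hxy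
  exact ⟨hx, hyz.2.1, (hxy.mono le_rfl h.le_succ).trans (.of_edge hlh le_rfl hyz)⟩

theorem lastExit_subset_lamRel (hlh : lo ≤ h) : lastExit I lo h ⊆ lamRel I lo (h + 1) := by
  rintro ⟨x, z⟩ ⟨y, hxy, hyz⟩
  obtain ⟨-, hz, hyz⟩ := mem_lamRel.mp hyz
  exact ⟨hxy.1, hz, (Linked.of_edge le_rfl (by omega) hxy).trans (hyz.mono lo.le_succ le_rfl)⟩

theorem lamRel_comp_inv_comp_subset (I : PathInstance A) (lo hi : ℕ) :
    lamRel I lo hi ○ SetRel.inv (lamRel I lo hi) ○ lamRel I lo hi ⊆ lamRel I lo hi := by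
  rintro ⟨x, z⟩ ⟨y, ⟨w, hxw, hyw⟩, hyz⟩
  obtain ⟨hx, -, hxw⟩ := mem_lamRel.mp hxw
  obtain ⟨-, -, hyw⟩ := mem_lamRel.mp hyw
  obtain ⟨-, hz, hyz⟩ := mem_lamRel.mp hyz
  exact ⟨hx, hz, hxw.trans (hyw.symm.trans hyz)⟩

theorem zigzag_subset_lamRel (hlh : lo ≤ h) (n : ℕ) : zigzag I lo h n ⊆ lamRel I lo (h + 1) := by
  induction n with
  | zero => exact firstHit_subset_lamRel hlh
  | succ n ih =>
    have hinv := SetRel.inv_mono (lastExit_subset_lamRel (I := I) hlh)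
    exact (SetRel.comp_subset_comp (SetRel.comp_subset_comp ih hinv)
      (firstHit_subset_lamRel hlh)).trans (lamRel_comp_inv_comp_subset I lo (h + 1))

theorem Linked.exists_lastExit {p : ℕ × A} (hxp : Linked I lo h (lo, x) p) (hx : x ∈ I.B lo) :
    ∃ y ∈ I.B lo, Linked I lo h (lo, y) p ∧
      (p = (lo, y) ∨ ∃ c, (y, c) ∈ edgeRel I lo ∧ Linked I (lo + 1) h (lo + 1, c) p) := by
  induction hxp with
  | refl => exact ⟨x, hx, .refl, .inl rfl⟩
  | @tail p q _ hpq ih =>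
    obtain ⟨l, b⟩ := q
    rcases (le_fst_of_symmGen_connAdj hpq).eq_or_lt with rfl | hlol
    · exact ⟨b, snd_mem_of_symmGen_connAdj hpq, .refl, .inl rfl⟩
    obtain ⟨y, hy, hyp, hlast⟩ := ih
    refine ⟨y, hy, hyp.tail hpq, .inr ?_⟩
    rcases hlast with rfl | ⟨c, hyc, hcp⟩
    · obtain ⟨rfl, hyb⟩ := exists_edgeRel_of_fst_lt hpq hlol
      exact ⟨b, hyb, .refl⟩
    · exact ⟨c, hyc, hcp.tail (symmGen_connAdj_succ_left hpq (hcp.le_fst le_rfl) hlol)⟩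

theorem exists_mem_firstHit_mem_lastExit (hlh : lo ≤ h) (hxz : (x, z) ∈ firstHit I lo h) :
    ∃ y, (y, z) ∈ firstHit I lo h ∧ (y, z) ∈ lastExit I lo h := by
  obtain ⟨w, hxw, hwz⟩ := hxz
  obtain ⟨hx, hw, hxw⟩ := mem_lamRel.mp hxw
  obtain ⟨y, hy, hyw, hlast⟩ := hxw.exists_lastExit hx
  refine ⟨y, ⟨w, ⟨hy, hw, hyw⟩, hwz⟩, ?_⟩
  rcases hlast with hwy | ⟨c, hyc, hcw⟩
  · obtain ⟨rfl, rfl⟩ := Prod.mk.inj hwy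
    exact ⟨z, hwz, hwz.2.1, hwz.2.1, .refl⟩
  · exact ⟨c, hyc, hyc.2.1, hwz.2.1,
      (hcw.mono le_rfl h.le_succ).trans (.of_edge (hcw.le_fst le_rfl) le_rfl hwz)⟩

theorem exists_mem_lastExit_of_mem_zigzag (hlh : lo ≤ h) {n : ℕ} (hxz : (x, z) ∈ zigzag I lo h n) :
    ∃ y, (y, z) ∈ firstHit I lo h ∧ (y, z) ∈ lastExit I lo h := by
  cases n with
  | zero => exact exists_mem_firstHit_mem_lastExit hlh hxz
  | succ n =>
    obtain ⟨_, _, hyz⟩ := hxz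
    exact exists_mem_firstHit_mem_lastExit hlh hyz

theorem zigzag_mono (hlh : lo ≤ h) : Monotone (zigzag I lo h) := by
  refine monotone_nat_of_le_succ fun n => ?_
  rintro ⟨x, z⟩ hxz
  obtain ⟨y, hfirst, hlast⟩ := exists_mem_lastExit_of_mem_zigzag hlh hxz
  exact ⟨y, ⟨z, hxz, hlast⟩, hfirst⟩

/-- The elements of `B_lo` from which a path starting in `x` may set out for its next climb to level
`h + 1`: `x` itself and the elements where the path descends to after some zigzag. -/
def zigzagBase (I : PathInstance A) (lo h : ℕ) (x : A) : Set A :=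
  {y | y ∈ I.B lo ∧ (y = x ∨ ∃ n z, (x, z) ∈ zigzag I lo h n ∧ (y, z) ∈ lastExit I lo h)}

theorem exists_mem_zigzag_of_mem_firstHit {y : A} (hy : y ∈ zigzagBase I lo h x)
    (hyz : (y, z) ∈ firstHit I lo h) : ∃ n, (x, z) ∈ zigzag I lo h n := by
  rcases hy with ⟨-, rfl | ⟨n, w, hxw, hyw⟩⟩
  · exact ⟨0, hyz⟩
  · exact ⟨n + 1, y, ⟨w, hxw, hyw⟩, hyz⟩

theorem Linked.zigzag_cases (hlh : lo ≤ h) {p : ℕ × A} (hx : x ∈ I.B lo)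
    (hxp : Linked I lo (h + 1) (lo, x) p) :
    (p.1 ≤ h ∧ ∃ y ∈ zigzagBase I lo h x, Linked I lo h (lo, y) p) ∨
      (lo < p.1 ∧ ∃ n z, (x, z) ∈ zigzag I lo h n ∧ Linked I (lo + 1) (h + 1) (h + 1, z) p) := by
  induction hxp with
  | refl => exact .inl ⟨hlh, x, ⟨hx, .inl rfl⟩, .refl⟩
  | @tail p q _ hpq ih =>
    obtain ⟨k, a⟩ := p
    obtain ⟨l, b⟩ := q
    rcases ih with ⟨hk, y, hy, hyp⟩ | ⟨hk, n, z, hxz, hzp⟩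
    · by_cases hl : l ≤ h
      · exact .inl ⟨hl, y, hy, hyp.tail (symmGen_connAdj_of_succ_right hpq hk hl)⟩
      obtain ⟨rfl, hab⟩ := exists_edgeRel_of_fst_lt hpq (hk.trans_lt (not_le.mp hl))
      obtain rfl : k = h := by dsimp only at hk hl; omega
      have hyb : (y, b) ∈ firstHit I lo k := ⟨a, ⟨hy.1, hab.1, hyp⟩, hab⟩
      obtain ⟨n, hxb⟩ := exists_mem_zigzag_of_mem_firstHit hy hyb
      exact .inr ⟨Nat.lt_succ_of_le hlh, n, b, hxb, .refl⟩
    · by_cases hl : lo < l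
      · exact .inr ⟨hl, n, z, hxz, hzp.tail (symmGen_connAdj_succ_left hpq hk hl)⟩
      obtain rfl : l = lo := le_antisymm (not_lt.mp hl) (le_fst_of_symmGen_connAdj hpq)
      obtain ⟨rfl, hba⟩ := exists_edgeRel_of_fst_lt hpq.symm hk
      have hz := (zigzag_subset_lamRel hlh n hxz).2.1
      have hbz : (b, z) ∈ lastExit I l h := ⟨a, hba, hba.2.1, hz, hzp.symm⟩
      exact .inl ⟨hlh, b, ⟨hba.1, .inr ⟨n, z, hxz, hbz⟩⟩, .refl⟩

theorem lamRel_succ (hlh : lo ≤ h) :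
    lamRel I lo (h + 1) = (⋃ n, zigzag I lo h n) ○ (lastExit I lo h).inv ○ lastExit I lo h := by
  apply subset_antisymm
  · rintro ⟨x, z⟩ hxz
    obtain ⟨hx, hz, hxz⟩ := mem_lamRel.mp hxz
    rcases hxz.zigzag_cases hlh hx with ⟨hle, _⟩ | ⟨_, n, w, hxw, hwz⟩
    · exact absurd hle h.lt_irrefl
    obtain ⟨y, -, hyw⟩ := exists_mem_lastExit_of_mem_zigzag hlh hxw
    obtain ⟨c, hyc, hcw⟩ := hyw
    obtain ⟨hc, -, hlink⟩ := mem_lamRel.mp hcw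
    exact ⟨y, ⟨w, Set.mem_iUnion.mpr ⟨n, hxw⟩, c, hyc, hcw⟩, c, hyc, hc, hz, hlink.trans hwz⟩
  · have hlast := lastExit_subset_lamRel (I := I) hlh
    exact (SetRel.comp_subset_comp (SetRel.comp_subset_comp
      (Set.iUnion_subset (zigzag_subset_lamRel hlh)) (SetRel.inv_mono hlast)) hlast).trans
      (lamRel_comp_inv_comp_subset I lo (h + 1))

end Zigzag

section LamInvariance

variable {A : Type} {I : PathInstance A} {q : ℕ} {t : (Fin q → A) → A}

theorem presOpRel_edgeRel {k : ℕ} (hB : PresOpSet t (I.B k)) (hB' : PresOpSet t (I.B (k + 1)))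
    (hE : PresOpRel t (I.E k)) : PresOpRel t (edgeRel I k) :=
  fun x y hxy => ⟨hB x fun j => (hxy j).1, hB' y fun j => (hxy j).2.1,
    hE x y fun j => (hxy j).2.2⟩

theorem presOpRel_lamRel_self {lo : ℕ} (hB : PresOpSet t (I.B lo)) :
    PresOpRel t (lamRel I lo lo) := by
  rw [lamRel_self]
  exact fun x y hxy => ⟨hB x fun j => (hxy j).1, congrArg t (funext fun j => (hxy j).2)⟩

theorem presOpRel_lamRel_succ {lo h : ℕ} (hlh : lo ≤ h) (hlo : PresOpRel t (edgeRel I lo))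
    (hh : PresOpRel t (edgeRel I h)) (hlower : PresOpRel t (lamRel I lo h))
    (hupper : PresOpRel t (lamRel I (lo + 1) (h + 1))) : PresOpRel t (lamRel I lo (h + 1)) := by
  have hfirst : PresOpRel t (firstHit I lo h) := hlower.comp hh
  have hlast : PresOpRel t (lastExit I lo h) := hlo.comp hupper
  have hzigzag (n : ℕ) : PresOpRel t (zigzag I lo h n) := by
    induction n with
    | zero => exact hfirst
    | succ n ih => exact (ih.comp hlast.inv).comp hfirst
  rw [lamRel_succ hlh]
  exact ((PresOpRel.iUnion_of_directed (zigzag_mono hlh).directed_le hzigzag).comp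
    hlast.inv).comp hlast

theorem presOpRel_lamRel {lo hi : ℕ} (hle : lo ≤ hi)
    (hB : ∀ k, lo ≤ k → k ≤ hi → PresOpSet t (I.B k))
    (hE : ∀ k, lo ≤ k → k + 1 ≤ hi → PresOpRel t (I.E k)) : PresOpRel t (lamRel I lo hi) := by
  obtain ⟨d, rfl⟩ := Nat.exists_eq_add_of_le hle
  induction d generalizing lo with
  | zero => exact presOpRel_lamRel_self (hB lo le_rfl le_rfl)
  | succ d ih =>
    have hedge (k : ℕ) (hk : lo ≤ k) (hk' : k ≤ lo + d) : PresOpRel t (edgeRel I k) :=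
      presOpRel_edgeRel (hB k hk (by omega)) (hB _ (by omega) (by omega)) (hE k hk (by omega))
    refine presOpRel_lamRel_succ (h := lo + d) (by omega) (hedge lo le_rfl (by omega))
      (hedge _ (by omega) le_rfl) ?_ ?_
    · exact ih (by omega) (fun k hk hk' => hB k hk (by omega)) fun k hk hk' => hE k hk (by omega)
    · rw [Nat.add_right_comm]
      exact ih (by omega) (fun k hk hk' => hB k (by omega) (by omega))
        fun k hk hk' => hE k (by omega) (by omega)

end LamInvariance

section Derivation

variable {A : Type} {𝔸 : RelStruct A} {I : PathInstance A} {lo hi k : ℕ}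

/-- The pairs in `B_lo × B_k` linked in `Conn(I_{[lo,hi]})`. For `k = hi` this is `λ_{I,lo,hi}`; the
program derives it for `k = lo, …, hi` in turn. Links may leave `[lo,k]`, which is what makes the
mirror image of each derivation step consistent. -/
def linkRel (I : PathInstance A) (lo hi k : ℕ) : SetRel A A :=
  {ab | ab.1 ∈ I.B lo ∧ ab.2 ∈ I.B k ∧ Linked I lo hi (lo, ab.1) (k, ab.2)}

theorem comp_pair {α β : Type*} (f : α → β) (a b : α) : (fun i => f (![a, b] i)) = ![f a, f b] := by
  ext i
  fin_cases i <;> rfl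

theorem mem_linkRel_succ_iff {a b c : A} (hlo : lo ≤ k) (hhi : k + 1 ≤ hi)
    (hbc : (b, c) ∈ edgeRel I k) : (a, c) ∈ linkRel I lo hi (k + 1) ↔ (a, b) ∈ linkRel I lo hi k :=
  ⟨fun h => ⟨h.1, hbc.1, h.2.2.trans (Linked.of_edge hlo hhi hbc).symm⟩,
    fun h => ⟨h.1, hbc.2.1, h.2.2.trans (Linked.of_edge hlo hhi hbc)⟩⟩

/-- The rule `linkRel_{lo}(x, x) ← B_lo(x)`, which starts the derivation of `λ`. -/
def linkStartRule (hi : ℕ)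
    (hlo : (⟨1, unaryRel (I.B lo)⟩ : Σ n : ℕ, Set (Fin n → A)) ∈ 𝔸.basic) : Rule A 𝔸 3 where
  head := ⟨2, ![0, 0], pairRel (linkRel I lo hi lo)⟩
  idb := none
  edb := [⟨1, fun _ => 0, unaryRel (I.B lo)⟩]
  head_arity := by simp
  idb_arity := by simp
  edb_arity := by simp
  edb_basic := by simpa using hlo
  nodup := by simp
  consistent f _ hf := by
    have h0 : f 0 ∈ I.B lo := hf _ (List.mem_singleton_self _)
    exact ⟨h0, h0, .refl⟩
  mirror := by simp

/-- The atoms of `B_k(y)`, `B_{k+1}(z)` and `B_{k,k+1}(y, z)`, where the three rule variables are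
`x, y, z`. -/
def edgeAtoms (I : PathInstance A) (k : ℕ) : List (Atom A 3) :=
  [⟨1, fun _ => 1, unaryRel (I.B k)⟩, ⟨1, fun _ => 2, unaryRel (I.B (k + 1))⟩,
    ⟨2, ![1, 2], pairRel (I.E k)⟩]

theorem forall_mem_edgeAtoms {P : Atom A 3 → Prop} :
    (∀ a ∈ edgeAtoms I k, P a) ↔ P ⟨1, fun _ => 1, unaryRel (I.B k)⟩ ∧
      P ⟨1, fun _ => 2, unaryRel (I.B (k + 1))⟩ ∧ P ⟨2, ![1, 2], pairRel (I.E k)⟩ := by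
  simp only [edgeAtoms, List.forall_mem_cons, List.not_mem_nil, false_imp_iff, implies_true,
    and_true]

theorem forall_mem_edgeAtoms_holds {f : Fin 3 → A} :
    (∀ a ∈ edgeAtoms I k, a.holds f) ↔ (f 1, f 2) ∈ edgeRel I k :=
  forall_mem_edgeAtoms

theorem nodup_edgeAtoms (I : PathInstance A) (k : ℕ) : (edgeAtoms I k).Nodup := by
  simp [edgeAtoms, funext_iff]

/-- The rule `linkRel_{k+1}(x, z) ← linkRel_k(x, y), B_k(y), B_{k+1}(z), B_{k,k+1}(y, z)`. -/
def linkStepRule (hlo : lo ≤ k) (hhi : k + 1 ≤ hi)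
    (hedge : ∀ a ∈ edgeAtoms I k, (⟨a.arity, a.rel⟩ : Σ n : ℕ, Set (Fin n → A)) ∈ 𝔸.basic) :
    Rule A 𝔸 3 where
  head := ⟨2, ![0, 2], pairRel (linkRel I lo hi (k + 1))⟩
  idb := some ⟨2, ![0, 1], pairRel (linkRel I lo hi k)⟩
  edb := edgeAtoms I k
  head_arity := by simp
  idb_arity := by simp
  edb_arity := forall_mem_edgeAtoms.mpr (by simp)
  edb_basic := hedge
  nodup := nodup_edgeAtoms I k
  consistent f hidb hedb :=
    (mem_linkRel_succ_iff hlo hhi (forall_mem_edgeAtoms_holds.mp hedb)).mpr (hidb _ rfl)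
  mirror := by
    rintro _ ⟨⟩ f hhead hedb
    exact (mem_linkRel_succ_iff hlo hhi (forall_mem_edgeAtoms_holds.mp hedb)).mp hhead

theorem derives_linkRel_self (hI : IsCSPInstance 𝔸 I.toInstance) (hlo : 1 ≤ lo) (hlo' : lo ≤ I.len)
    (hi : ℕ) : Derives 𝔸 3 I.toInstance ![lo, lo] (pairRel (linkRel I lo hi lo)) := by
  have hmem := unary_mem_constraints hlo hlo'
  have hscope := comp_pair (fun _ : Fin 3 => lo) 0 0
  rw [← hscope]
  exact .step (linkStartRule hi (hI _ hmem)) (fun _ => lo) (by rintro _ ⟨⟩)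
    (List.forall_mem_singleton.mpr hmem)

theorem derives_linkRel_succ (hI : IsCSPInstance 𝔸 I.toInstance) (hlo : 1 ≤ lo) (hhi : hi ≤ I.len)
    (hlok : lo ≤ k) (hkhi : k + 1 ≤ hi)
    (hk : Derives 𝔸 3 I.toInstance ![lo, k] (pairRel (linkRel I lo hi k))) :
    Derives 𝔸 3 I.toInstance ![lo, k + 1] (pairRel (linkRel I lo hi (k + 1))) := by
  have hB := unary_mem_constraints (I := I) (hlo.trans hlok) (by omega)
  have hB' := unary_mem_constraints (I := I) (k := k + 1) (by omega) (by omega)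
  have hE := pair_mem_constraints (I := I) (hlo.trans hlok) (by omega)
  let ω : Fin 3 → ℕ := ![lo, k, k + 1]
  have hhead : (fun i => ω (![0, 2] i)) = ![lo, k + 1] := comp_pair ω 0 2
  have hidb : (fun i => ω (![0, 1] i)) = ![lo, k] := comp_pair ω 0 1
  have hedb : (fun i => ω (![1, 2] i)) = ![k, k + 1] := comp_pair ω 1 2
  rw [← hhead]
  refine .step (linkStepRule hlok hkhi (forall_mem_edgeAtoms.mpr ⟨hI _ hB, hI _ hB', hI _ hE⟩)) ω
    ?_ (forall_mem_edgeAtoms.mpr ⟨hB, hB', ?_⟩)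
  · rintro _ ⟨⟩
    rwa [hidb]
  · rwa [hedb]

theorem derives_lamRel (hI : IsCSPInstance 𝔸 I.toInstance) (hlo : 1 ≤ lo) (hle : lo ≤ hi)
    (hhi : hi ≤ I.len) : Derives 𝔸 3 I.toInstance ![lo, hi] (pairRel (lamRel I lo hi)) := by
  have derives_linkRel (k : ℕ) (hlok : lo ≤ k) (hkhi : k ≤ hi) :
      Derives 𝔸 3 I.toInstance ![lo, k] (pairRel (linkRel I lo hi k)) := by
    induction k, hlok using Nat.le_induction with
    | base => exact derives_linkRel_self hI hlo (hle.trans hhi) hi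
    | succ k hlok ih => exact derives_linkRel_succ hI hlo hhi hlok hkhi (ih (by omega))
  exact derives_linkRel hi hle le_rfl

end Derivation

section Enumeration

variable {A : Type} {I : PathInstance A} {s t v : ℕ}

theorem mem_lamVars : v ∈ lamVars I ↔ (1 ≤ v ∧ v ≤ I.len) ∧
    (v = 1 ∨ v = I.len ∨ BackwardAt I v ∨ (2 ≤ v ∧ BackwardAt I (v - 1))) := by
  simp only [lamVars, Finset.mem_filter, Finset.mem_Icc]

theorem one_mem_lamVars (hlen : 1 ≤ I.len) : 1 ∈ lamVars I :=
  mem_lamVars.mpr ⟨⟨le_rfl, hlen⟩, .inl rfl⟩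

theorem len_mem_lamVars (hlen : 1 ≤ I.len) : I.len ∈ lamVars I :=
  mem_lamVars.mpr ⟨⟨hlen, le_rfl⟩, .inr (.inl rfl)⟩

theorem BackwardAt.mem_lamVars (hv : BackwardAt I v) : v ∈ lamVars I :=
  CSPPaper.mem_lamVars.mpr ⟨⟨hv.1, v.le_succ.trans hv.2.1⟩, .inr (.inr (.inl hv))⟩

theorem BackwardAt.succ_mem_lamVars (hv : BackwardAt I v) : v + 1 ∈ lamVars I :=
  CSPPaper.mem_lamVars.mpr
    ⟨⟨Nat.succ_pos v, hv.2.1⟩, .inr (.inr (.inr ⟨Nat.succ_le_succ hv.1, hv⟩))⟩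

theorem one_le_len_lamInst (hlen : 1 ≤ I.len) : 1 ≤ (lamInst I).len :=
  Finset.card_pos.mpr ⟨1, one_mem_lamVars hlen⟩

theorem lamEnum_succ_eq_orderEmbOfFin (i : Fin (lamVars I).card) :
    lamEnum I (i + 1) = (lamVars I).orderEmbOfFin rfl i := by
  rw [lamEnum, Finset.orderEmbOfFin_apply, List.getD_eq_getElem]
  rfl

theorem exists_fin_succ_eq {n : ℕ} (ht : 1 ≤ t) (ht' : t ≤ n) : ∃ i : Fin n, (i : ℕ) + 1 = t :=
  ⟨⟨t - 1, Nat.sub_one_lt_of_le ht ht'⟩, Nat.sub_add_cancel ht⟩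

theorem lamEnum_mem (ht : 1 ≤ t) (ht' : t ≤ (lamInst I).len) : lamEnum I t ∈ lamVars I := by
  obtain ⟨i, rfl⟩ := exists_fin_succ_eq (n := (lamVars I).card) ht ht'
  rw [lamEnum_succ_eq_orderEmbOfFin]
  exact Finset.orderEmbOfFin_mem _ rfl i

theorem one_le_lamEnum (ht : 1 ≤ t) (ht' : t ≤ (lamInst I).len) : 1 ≤ lamEnum I t :=
  (mem_lamVars.mp (lamEnum_mem ht ht')).1.1

theorem lamEnum_le_len (ht : 1 ≤ t) (ht' : t ≤ (lamInst I).len) : lamEnum I t ≤ I.len :=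
  (mem_lamVars.mp (lamEnum_mem ht ht')).1.2

theorem strictMonoOn_lamEnum (I : PathInstance A) :
    StrictMonoOn (lamEnum I) (Set.Icc 1 (lamInst I).len) := by
  rintro s ⟨hs, hs'⟩ t ⟨ht, ht'⟩ hst
  obtain ⟨i, rfl⟩ := exists_fin_succ_eq (n := (lamVars I).card) hs hs'
  obtain ⟨j, rfl⟩ := exists_fin_succ_eq (n := (lamVars I).card) ht ht'
  rw [lamEnum_succ_eq_orderEmbOfFin, lamEnum_succ_eq_orderEmbOfFin, OrderEmbedding.lt_iff_lt]
  exact Nat.succ_lt_succ_iff.mp hst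

theorem lamEnum_lt_lamEnum_succ (ht : 1 ≤ t) (ht' : t + 1 ≤ (lamInst I).len) :
    lamEnum I t < lamEnum I (t + 1) :=
  strictMonoOn_lamEnum I ⟨ht, t.le_succ.trans ht'⟩ ⟨ht.trans t.le_succ, ht'⟩ t.lt_succ_self

theorem exists_lamEnum_eq (hv : v ∈ lamVars I) :
    ∃ t ∈ Set.Icc 1 (lamInst I).len, lamEnum I t = v := by
  obtain ⟨i, rfl⟩ : v ∈ Set.range ((lamVars I).orderEmbOfFin rfl) := by
    rwa [Finset.range_orderEmbOfFin]
  exact ⟨i + 1, ⟨Nat.succ_pos _, i.isLt⟩, lamEnum_succ_eq_orderEmbOfFin i⟩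

theorem lamEnum_succ_le (ht : 1 ≤ t) (ht' : t + 1 ≤ (lamInst I).len) (hv : v ∈ lamVars I)
    (hlt : lamEnum I t < v) : lamEnum I (t + 1) ≤ v := by
  obtain ⟨s, hs, rfl⟩ := exists_lamEnum_eq hv
  have hts : t < s := ((strictMonoOn_lamEnum I).lt_iff_lt ⟨ht, t.le_succ.trans ht'⟩ hs).mp hlt
  exact (strictMonoOn_lamEnum I).monotoneOn ⟨ht.trans t.le_succ, ht'⟩ hs hts

theorem lamEnum_one (hlen : 1 ≤ (lamInst I).len) : lamEnum I 1 = 1 := by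
  have hlen' : 1 ≤ I.len := (one_le_lamEnum le_rfl hlen).trans (lamEnum_le_len le_rfl hlen)
  obtain ⟨s, hs, hs'⟩ := exists_lamEnum_eq (one_mem_lamVars hlen')
  refine le_antisymm ?_ (one_le_lamEnum le_rfl hlen)
  exact hs' ▸ (strictMonoOn_lamEnum I).monotoneOn ⟨le_rfl, hlen⟩ hs hs.1

theorem lamEnum_len (hlen : 1 ≤ I.len) : lamEnum I (lamInst I).len = I.len := by
  have hlen' := one_le_len_lamInst hlen
  obtain ⟨s, hs, hs'⟩ := exists_lamEnum_eq (len_mem_lamVars hlen)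
  refine le_antisymm (lamEnum_le_len hlen' le_rfl) ?_
  exact hs'.symm.trans_le ((strictMonoOn_lamEnum I).monotoneOn hs ⟨hlen', le_rfl⟩ hs.2)

theorem lamInst_E_of_eq (ht : lamEnum I (t + 1) = lamEnum I t + 1) :
    (lamInst I).E t = I.E (lamEnum I t) :=
  if_pos ht

theorem lamInst_E_of_ne (ht : lamEnum I (t + 1) ≠ lamEnum I t + 1) :
    (lamInst I).E t = lamRel I (lamEnum I t) (lamEnum I (t + 1)) :=
  if_neg ht

theorem lamEnum_succ_eq_of_backwardAt (ht : 1 ≤ t) (ht' : t + 1 ≤ (lamInst I).len) {i : ℕ}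
    (hi : lamEnum I t ≤ i) (hi' : i < lamEnum I (t + 1)) (hback : BackwardAt I i) :
    lamEnum I (t + 1) = lamEnum I t + 1 := by
  have hnext := lamEnum_succ_le ht ht' hback.succ_mem_lamVars (Nat.lt_succ_of_le hi)
  rcases hi.eq_or_lt with rfl | hlt
  · exact le_antisymm hnext hi'
  · exact absurd (lamEnum_succ_le ht ht' hback.mem_lamVars hlt) hi'.not_ge

end Enumeration

section Reachability

variable {A : Type} {I : PathInstance A} {lo hi k t : ℕ}

theorem mem_reachSet_succ (hk : 1 ≤ k) {b : A} :
    b ∈ reachSet I (k + 1) ↔ b ∈ I.B (k + 1) ∧ ∃ c ∈ reachSet I k, (c, b) ∈ I.E k := by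
  obtain ⟨k, rfl⟩ := Nat.exists_eq_add_of_le' hk
  exact Iff.rfl

theorem reachSet_subset (hk : 1 ≤ k) : reachSet I k ⊆ I.B k := by
  cases k, hk using Nat.le_induction with
  | base => exact subset_rfl
  | succ k hk => exact fun b hb => ((mem_reachSet_succ hk).mp hb).1

theorem Linked.mem_reachSet (hlo : 1 ≤ lo) (hhi : hi ≤ I.len)
    (hback : ∀ i, lo ≤ i → i < hi → ¬BackwardAt I i) {p q : ℕ × A} (hpq : Linked I lo hi p q)
    (hp : p.2 ∈ reachSet I p.1) : q.2 ∈ reachSet I q.1 := by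
  induction hpq with
  | refl => exact hp
  | @tail p q _ hpq ih =>
    obtain ⟨k, a⟩ := p
    obtain ⟨l, b⟩ := q
    rcases hpq with ⟨hk, -, rfl, _, hb, hab⟩ | ⟨hl, hl', rfl, hb, _, hba⟩
    · exact (mem_reachSet_succ (hlo.trans hk)).mpr ⟨hb, a, ih, hab⟩
    · by_contra hbl
      exact hback l hl hl' ⟨hlo.trans hl, hl'.trans hhi, b, a, hba, hb, hbl, ih⟩

theorem exists_linked_of_mem_reachSet (hlo : 1 ≤ lo) (hle : lo ≤ k) {b : A}
    (hb : b ∈ reachSet I k) : ∃ a ∈ reachSet I lo, Linked I lo k (lo, a) (k, b) := by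
  induction k, hle using Nat.le_induction generalizing b with
  | base => exact ⟨b, hb, .refl⟩
  | succ k hk ih =>
    have hk1 := hlo.trans hk
    obtain ⟨hbB, c, hc, hcb⟩ := (mem_reachSet_succ hk1).mp hb
    obtain ⟨a, ha, hac⟩ := ih hc
    have hedge : (c, b) ∈ edgeRel I k := ⟨reachSet_subset hk1 hc, hbB, hcb⟩
    exact ⟨a, ha, (hac.mono le_rfl k.le_succ).trans (.of_edge hk le_rfl hedge)⟩

theorem exists_mem_reachSet_mem_lamRel_iff (hlo : 1 ≤ lo) (hle : lo ≤ hi) (hhi : hi ≤ I.len)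
    (hback : ∀ i, lo ≤ i → i < hi → ¬BackwardAt I i) {b : A} :
    (∃ a ∈ reachSet I lo, (a, b) ∈ lamRel I lo hi) ↔ b ∈ reachSet I hi := by
  constructor
  · rintro ⟨a, ha, hab⟩
    exact (mem_lamRel.mp hab).2.2.mem_reachSet hlo hhi hback ha
  · intro hb
    obtain ⟨a, ha, hab⟩ := exists_linked_of_mem_reachSet hlo hle hb
    exact ⟨a, ha, reachSet_subset hlo ha, reachSet_subset (hlo.trans hle) hb, hab⟩

theorem reachSet_lamInst (ht : 1 ≤ t) (ht' : t ≤ (lamInst I).len) :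
    reachSet (lamInst I) t = reachSet I (lamEnum I t) := by
  induction t, ht using Nat.le_induction with
  | base =>
    change I.B (lamEnum I 1) = _
    rw [lamEnum_one ht']
    rfl
  | succ t ht ih =>
    have htlen := t.le_succ.trans ht'
    have hpos := one_le_lamEnum ht htlen
    ext b
    rw [mem_reachSet_succ ht, ih htlen]
    change b ∈ I.B (lamEnum I (t + 1)) ∧ _ ↔ _
    by_cases hstep : lamEnum I (t + 1) = lamEnum I t + 1
    · rw [lamInst_E_of_eq hstep, hstep, mem_reachSet_succ hpos]
    · have hlen := lamEnum_le_len (ht.trans t.le_succ) ht'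
      have hback (i : ℕ) (hi : lamEnum I t ≤ i) (hi' : i < lamEnum I (t + 1)) :
          ¬BackwardAt I i :=
        fun h => hstep (lamEnum_succ_eq_of_backwardAt ht ht' hi hi' h)
      rw [lamInst_E_of_ne hstep, exists_mem_reachSet_mem_lamRel_iff hpos
        (lamEnum_lt_lamEnum_succ ht ht').le hlen hback, and_iff_right_iff_imp]
      exact fun hb => reachSet_subset (hpos.trans (lamEnum_lt_lamEnum_succ ht ht').le) hb

theorem IsSolutionOn.mem_reachSet {s : ℕ → A} (hk : 1 ≤ k) (hs : IsSolutionOn I 1 k s) :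
    s k ∈ reachSet I k := by
  induction k, hk using Nat.le_induction with
  | base => exact hs.1 1 le_rfl le_rfl
  | succ k hk ih =>
    have hs' : IsSolutionOn I 1 k s :=
      ⟨fun i hi hik => hs.1 i hi (hik.trans k.le_succ),
        fun i hi hik => hs.2 i hi (hik.trans k.le_succ)⟩
    exact (mem_reachSet_succ hk).mpr ⟨hs.1 _ (by omega) le_rfl, s k, ih hs', hs.2 k hk le_rfl⟩

theorem IsSolutionOn.update_succ {s : ℕ → A} (hs : IsSolutionOn I 1 k s) {b : A}
    (hb : b ∈ I.B (k + 1)) (hsb : (s k, b) ∈ I.E k) :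
    IsSolutionOn I 1 (k + 1) (Function.update s (k + 1) b) := by
  refine ⟨fun i hi hik => ?_, fun i hi hik => ?_⟩
  · rcases hik.eq_or_lt with rfl | hik
    · rwa [Function.update_self]
    · rw [Function.update_of_ne hik.ne]
      exact hs.1 i hi (Nat.le_of_lt_succ hik)
  · have hik' : i ≤ k := Nat.le_of_succ_le_succ hik
    rw [Function.update_of_ne (by omega : i ≠ k + 1)]
    rcases hik'.eq_or_lt with rfl | hik'
    · rwa [Function.update_self]
    · rw [Function.update_of_ne (by omega : i + 1 ≠ k + 1)]
      exact hs.2 i hi hik'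

theorem exists_isSolutionOn_of_mem_reachSet (hk : 1 ≤ k) {b : A} (hb : b ∈ reachSet I k) :
    ∃ s : ℕ → A, s k = b ∧ IsSolutionOn I 1 k s := by
  induction k, hk using Nat.le_induction generalizing b with
  | base =>
    refine ⟨fun _ => b, rfl, fun i hi hi' => ?_, fun i hi hi' => by omega⟩
    rwa [le_antisymm hi' hi]
  | succ k hk ih =>
    obtain ⟨hbB, c, hc, hcb⟩ := (mem_reachSet_succ hk).mp hb
    obtain ⟨s, rfl, hs⟩ := ih hc
    exact ⟨_, Function.update_self .., hs.update_succ hbB hcb⟩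

theorem exists_isSolution_iff (hlen : 1 ≤ I.len) :
    (∃ s, IsSolution I s) ↔ (reachSet I I.len).Nonempty := by
  constructor
  · rintro ⟨s, hs⟩
    exact ⟨s I.len, IsSolutionOn.mem_reachSet hlen hs⟩
  · rintro ⟨b, hb⟩
    obtain ⟨s, -, hs⟩ := exists_isSolutionOn_of_mem_reachSet hlen hb
    exact ⟨s, hs⟩

theorem exists_isSolution_lamInst_iff (hlen : 1 ≤ I.len) :
    (∃ s, IsSolution (lamInst I) s) ↔ ∃ s, IsSolution I s := by
  have hlen' := one_le_len_lamInst hlen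
  rw [exists_isSolution_iff hlen, exists_isSolution_iff hlen', reachSet_lamInst hlen' le_rfl,
    lamEnum_len hlen]

end Reachability

section BackwardEdges

variable {A : Type} {I : PathInstance A} {t : ℕ}

theorem backwardAt_lamInst (ht : 1 ≤ t) (ht' : t + 1 ≤ (lamInst I).len)
    (hback : BackwardAt I (lamEnum I t)) : BackwardAt (lamInst I) t := by
  have hstep := lamEnum_succ_eq_of_backwardAt ht ht' le_rfl (lamEnum_lt_lamEnum_succ ht ht') hback
  obtain ⟨-, -, b, c, hbc, hb, hbC, hcC⟩ := hback
  refine ⟨ht, ht', b, c, ?_, hb, ?_, ?_⟩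
  · rwa [lamInst_E_of_eq hstep]
  · rwa [reachSet_lamInst ht (t.le_succ.trans ht')]
  · rwa [reachSet_lamInst (ht.trans t.le_succ) ht', hstep]

theorem backwardAt_lamInst_or_succ (ht : 1 ≤ t) (ht' : t + 2 ≤ (lamInst I).len) :
    BackwardAt (lamInst I) t ∨ BackwardAt (lamInst I) (t + 1) := by
  have ht1 : 1 ≤ t + 1 := ht.trans t.le_succ
  have ht1' : t + 1 ≤ (lamInst I).len := by omega
  have hpos := one_le_lamEnum ht (t.le_succ.trans ht1')
  have hlt := lamEnum_lt_lamEnum_succ ht ht1'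
  have hlt' : lamEnum I (t + 1) < lamEnum I (t + 2) := lamEnum_lt_lamEnum_succ ht1 ht'
  have hlen : lamEnum I (t + 2) ≤ I.len := lamEnum_le_len (by omega) ht'
  obtain ⟨-, hone | hlast | hback | ⟨-, hback⟩⟩ := mem_lamVars.mp (lamEnum_mem ht1 ht1')
  · omega
  · omega
  · exact .inr (backwardAt_lamInst ht1 ht' hback)
  · have hprev : lamEnum I (t + 1) = lamEnum I t + 1 :=
      lamEnum_succ_eq_of_backwardAt ht ht1' (by omega) (by omega) hback
    rw [hprev, Nat.add_sub_cancel] at hback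
    exact .inl (backwardAt_lamInst ht ht1' hback)

theorem le_ncard_of_forall_or_succ {P : ℕ → Prop} {m a b : ℕ} (hab : a + 2 * m + 1 ≤ b)
    (hP : ∀ j, a ≤ j → j + 2 ≤ b → P j ∨ P (j + 1)) :
    m ≤ {j | a ≤ j ∧ j < b ∧ P j}.ncard := by
  induction m generalizing a with
  | zero => exact Nat.zero_le _
  | succ m ih =>
    have hrest : m ≤ {j | a + 2 ≤ j ∧ j < b ∧ P j}.ncard :=
      ih (by omega) fun j hj => hP j (by omega)
    obtain ⟨i, hai, hia, hi⟩ : ∃ i, a ≤ i ∧ i ≤ a + 1 ∧ P i := by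
      rcases hP a le_rfl (by omega) with h | h
      exacts [⟨a, le_rfl, a.le_succ, h⟩, ⟨a + 1, a.le_succ, le_rfl, h⟩]
    have hfin (c : ℕ) : {j | c ≤ j ∧ j < b ∧ P j}.Finite :=
      (Set.finite_Iio b).subset fun j hj => hj.2.1
    have hsub : insert i {j | a + 2 ≤ j ∧ j < b ∧ P j} ⊆ {j | a ≤ j ∧ j < b ∧ P j} := by
      rintro j (rfl | ⟨haj, hjb, hj⟩)
      exacts [⟨hai, by omega, hi⟩, ⟨by omega, hjb, hj⟩]
    calc m + 1 ≤ {j | a + 2 ≤ j ∧ j < b ∧ P j}.ncard + 1 := Nat.succ_le_succ hrest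
      _ = (insert i {j | a + 2 ≤ j ∧ j < b ∧ P j}).ncard :=
        (Set.ncard_insert_of_notMem (fun h => by have := h.1; omega) (hfin _)).symm
      _ ≤ _ := Set.ncard_le_ncard hsub (hfin a)

end BackwardEdges

section LamInstance

variable {A : Type} {𝔸 : RelStruct A} {I : PathInstance A} {k : ℕ}

theorem derives_lamInst_B (hk : 1 ≤ k) (hk' : k ≤ (lamInst I).len) :
    Derives 𝔸 3 I.toInstance (fun _ : Fin 1 => lamEnum I k) (unaryRel ((lamInst I).B k)) :=
  .base _ _ (unary_mem_constraints (one_le_lamEnum hk hk') (lamEnum_le_len hk hk'))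

theorem derives_lamInst_E (hI : IsCSPInstance 𝔸 I.toInstance) (hk : 1 ≤ k)
    (hk' : k + 1 ≤ (lamInst I).len) :
    Derives 𝔸 3 I.toInstance ![lamEnum I k, lamEnum I (k + 1)] (pairRel ((lamInst I).E k)) := by
  have hpos := one_le_lamEnum hk (k.le_succ.trans hk')
  have hlen := lamEnum_le_len (hk.trans k.le_succ) hk'
  by_cases hstep : lamEnum I (k + 1) = lamEnum I k + 1
  · rw [lamInst_E_of_eq hstep, hstep]
    exact .base _ _ (pair_mem_constraints hpos (hstep ▸ hlen))
  · rw [lamInst_E_of_ne hstep]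
    exact derives_lamRel hI hpos (lamEnum_lt_lamEnum_succ hk hk').le hlen

theorem IsPolymorphism.presOpRel_lamInst_E {q : ℕ} {t : (Fin q → A) → A}
    (ht : IsPolymorphism 𝔸 t) (hI : IsCSPInstance 𝔸 I.toInstance) (hk : 1 ≤ k)
    (hk' : k + 1 ≤ (lamInst I).len) : PresOpRel t ((lamInst I).E k) := by
  have hpos := one_le_lamEnum hk (k.le_succ.trans hk')
  have hlen := lamEnum_le_len (hk.trans k.le_succ) hk'
  by_cases hstep : lamEnum I (k + 1) = lamEnum I k + 1
  · rw [lamInst_E_of_eq hstep]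
    exact ht.presOpRel_E hI hpos (hstep ▸ hlen)
  · rw [lamInst_E_of_ne hstep]
    exact presOpRel_lamRel (lamEnum_lt_lamEnum_succ hk hk').le
      (fun i hi hi' => ht.presOpSet_B hI (hpos.trans hi) (hi'.trans hlen))
      fun i hi hi' => ht.presOpRel_E hI (hpos.trans hi) (hi'.trans hlen)

end LamInstance

theorem statement12_general {A : Type} (𝔸 : RelStruct A) (I : PathInstance A)
    (hI : IsCSPInstance 𝔸 I.toInstance)
    (hlen : 1 ≤ I.len) :
    ((∀ t, 1 ≤ t → t ≤ (lamInst I).len →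
        Derives 𝔸 3 I.toInstance (fun _ : Fin 1 => lamEnum I t)
          (unaryRel ((lamInst I).B t))) ∧
     (∀ t, 1 ≤ t → t + 1 ≤ (lamInst I).len →
        Derives 𝔸 3 I.toInstance ![lamEnum I t, lamEnum I (t + 1)]
          (pairRel ((lamInst I).E t)))) ∧
    ((∃ s : ℕ → A, IsSolution (lamInst I) s) ↔ ∃ s : ℕ → A, IsSolution I s) ∧
    (∀ m a b : ℕ, 1 ≤ a → b ≤ (lamInst I).len → a + 2 * m + 1 ≤ b →
      m ≤ {j | a ≤ j ∧ j < b ∧ BackwardAt (lamInst I) j}.ncard) ∧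
    (∀ (q : ℕ) (t : (Fin q → A) → A), IsPolymorphism 𝔸 t →
      (∀ v, 1 ≤ v → v ≤ (lamInst I).len → PresOpSet t ((lamInst I).B v)) ∧
      (∀ v, 1 ≤ v → v + 1 ≤ (lamInst I).len → PresOpRel t ((lamInst I).E v))) := by
  refine ⟨⟨fun _ => derives_lamInst_B, fun _ => derives_lamInst_E hI⟩,
    exists_isSolution_lamInst_iff hlen, fun m a b ha hb hab => ?_, fun q t ht => ⟨?_, ?_⟩⟩
  · exact le_ncard_of_forall_or_succ hab fun j haj hjb =>
      backwardAt_lamInst_or_succ (ha.trans haj) (hjb.trans hb)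
  · exact fun v hv hv' => ht.presOpSet_B hI (one_le_lamEnum hv hv') (lamEnum_le_len hv hv')
  · exact fun v hv hv' => ht.presOpRel_lamInst_E hI hv hv'

/-- the instance `I_λ`.
Let `I` be an unsatisfiable path instance of `CSP(𝔸)`. Then `𝒫_𝔸^3` derives
from `I` the instance `I_λ`; `I_λ` is an unsatisfiable path instance; for
every `m`, any interval of variables of `I_λ` of length at least `2m+2`
contains at least `m` indices with backward edges; and all constraint relations
of `I_λ` are invariant under all polymorphisms of `𝔸`. -/
theorem statement12 {A : Type} [Finite A] (𝔸 : RelStruct A) (I : PathInstance A)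
    (hI : IsCSPInstance 𝔸 I.toInstance)
    (hlen : 1 ≤ I.len)
    (hunsat : ¬∃ f : ℕ → A, IsSolution I f) :
    ((∀ t, 1 ≤ t → t ≤ (lamInst I).len →
        Derives 𝔸 3 I.toInstance (fun _ : Fin 1 => lamEnum I t)
          (unaryRel ((lamInst I).B t))) ∧
     (∀ t, 1 ≤ t → t + 1 ≤ (lamInst I).len →
        Derives 𝔸 3 I.toInstance ![lamEnum I t, lamEnum I (t + 1)]
          (pairRel ((lamInst I).E t)))) ∧
    (¬∃ s : ℕ → A, IsSolution (lamInst I) s) ∧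
    (∀ m a b : ℕ, 1 ≤ a → b ≤ (lamInst I).len → a + 2 * m + 1 ≤ b →
      m ≤ {j | a ≤ j ∧ j < b ∧ BackwardAt (lamInst I) j}.ncard) ∧
    (∀ (q : ℕ) (t : (Fin q → A) → A), IsPolymorphism 𝔸 t →
      (∀ v, 1 ≤ v → v ≤ (lamInst I).len → PresOpSet t ((lamInst I).B v)) ∧
      (∀ v, 1 ≤ v → v + 1 ≤ (lamInst I).len → PresOpRel t ((lamInst I).E v))) := by
  obtain ⟨hderives, hsat, hbackward, hinv⟩ := statement12_general 𝔸 I hI hlen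
  exact ⟨hderives, hsat.not.mpr hunsat, hbackward, hinv⟩

end CSPPaper
end

section
/- For each relational structure 𝔸 admitting a chain of n Hagemann–Mitschke terms as polymorphisms, there exists M ∈ ℕ such that whenever I is an unsatisfiable path instance of CSP(𝔸), then 𝒫_𝔸^M(I) ⊢ G. -/
namespace CSPPaper

/-
On a path, the values reachable from the left end form a family `C` closed under moving right, and
the goal is derived once this propagation ends in the empty set. A symmetric program must be able
to undo each move. This only fails at a backward edge, one that enters `C` from outside, so it
suffices to remember membership in `C` at all the positions of backward edges passed so far.

When every value extends to a solution, the number of backward edges is bounded in terms of the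
domain: by Ramsey's theorem, many of them yield positions `i < j < k` with `C i = C j` and with the
same relation between `i` and `j`, between `j` and `k` and between `i` and `k`. That relation is
idempotent, so each of its edges factors through a loop, and the Hagemann–Mitschke terms reverse
edges between loops; hence no edge of it enters `C i` from outside.

The path is made consistent recursively, restarting the propagation from a later position `u + 1`.
If `u` is the last position that reaches the same values at the end, strictly more values are
reachable from `u + 1` than from `u`, everywhere in between. Thus the recursion has depth at most
the size of the domain. It is run twice, the second time from right to left inside each step of the
first, to obtain the values that extend to solutions in both directions.
-/

section MonochromaticTriangles

open Finset

variable {α κ : Type*} [LinearOrder α]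

lemma exists_monochromatic_star (t : Finset κ) (S : Finset α) (c : α → α → κ) (K : ℕ)
    (hS : #t * K + 1 < #S) (hc : ∀ i ∈ S, ∀ j ∈ S, i < j → c i j ∈ t) :
    ∃ s ∈ S, ∃ y ∈ t, ∃ T ⊆ S, K < #T ∧ ∀ j ∈ T, s < j ∧ c s j = y := by
  classical
  have hne : S.Nonempty := card_pos.mp (by omega)
  set s := S.min' hne
  have hs : s ∈ S := S.min'_mem hne
  have hlt : ∀ j ∈ S.erase s, s < j := fun j hj =>
    (S.min'_le j (mem_of_mem_erase hj)).lt_of_ne (ne_of_mem_erase hj).symm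
  obtain ⟨y, hy, hK⟩ := exists_lt_card_fiber_of_mul_lt_card_of_maps_to
    (fun j hj => hc s hs j (mem_of_mem_erase hj) (hlt j hj))
    (show #t * K < #(S.erase s) by rw [card_erase_of_mem hs]; omega)
  refine ⟨s, hs, y, hy, _, (filter_subset _ _).trans (erase_subset _ _), hK, fun j hj => ?_⟩
  obtain ⟨hj, hjy⟩ := mem_filter.mp hj
  exact ⟨hlt j hj, hjy⟩

/-- A Ramsey bound: the most elements that a linear order without a monochromatic triangle can
have when its pairs are coloured with `q` colours. Not optimal. -/
def triangleBound : ℕ → ℕ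
  | 0 => 1
  | q + 1 => (q + 1) * triangleBound q + 1

theorem exists_monochromatic_triangle (t : Finset κ) (S : Finset α) (c : α → α → κ)
    (hS : triangleBound #t < #S) (hc : ∀ i ∈ S, ∀ j ∈ S, i < j → c i j ∈ t) :
    ∃ i ∈ S, ∃ j ∈ S, ∃ k ∈ S, i < j ∧ j < k ∧ c i j = c i k ∧ c i j = c j k := by
  classical
  induction hq : #t generalizing t S with
  | zero =>
    rw [hq] at hS
    obtain ⟨i, hi, j, hj, hij⟩ := one_lt_card.mp hS
    rw [card_eq_zero.mp hq] at hc
    rcases hij.lt_or_gt with h | h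
    exacts [absurd (hc i hi j hj h) (notMem_empty _), absurd (hc j hj i hi h) (notMem_empty _)]
  | succ q ih =>
    obtain ⟨s, hs, y, hy, T, hTS, hT, hsT⟩ :=
      exists_monochromatic_star t S c (triangleBound q) (by rwa [hq] at hS ⊢) hc
    by_cases hyT : ∃ i ∈ T, ∃ j ∈ T, i < j ∧ c i j = y
    · obtain ⟨i, hi, j, hj, hij, hcij⟩ := hyT
      exact ⟨s, hs, i, hTS hi, j, hTS hj, (hsT i hi).1, hij,
        (hsT i hi).2.trans (hsT j hj).2.symm, (hsT i hi).2.trans hcij.symm⟩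
    · push Not at hyT
      have hcard : #(t.erase y) = q := by rw [card_erase_of_mem hy, hq, Nat.add_sub_cancel]
      obtain ⟨i, hi, j, hj, k, hk, h⟩ := ih (t.erase y) T (by rwa [hcard])
        (fun i hi j hj hij =>
          mem_erase.mpr ⟨hyT i hi j hj hij, hc i (hTS hi) j (hTS hj) hij⟩) hcard
      exact ⟨i, hTS hi, j, hTS hj, k, hTS hk, h⟩

end MonochromaticTriangles

section HagemannMitschke

open scoped SetRel

variable {A : Type} {R : SetRel A A} {n : ℕ} {p : ℕ → A → A → A → A}

lemma exists_loop_of_comp_self_eq [Finite A] (hR : R ○ R = R) {b c : A} (hbc : (b, c) ∈ R) :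
    ∃ z, (z, z) ∈ R ∧ (b, z) ∈ R ∧ (z, c) ∈ R := by
  have trans : ∀ {x y z}, (x, y) ∈ R → (y, z) ∈ R → (x, z) ∈ R := fun hxy hyz =>
    hR.subset ⟨_, hxy, hyz⟩
  have dense : ∀ {x z}, (x, z) ∈ R → ∃ y, (x, y) ∈ R ∧ (y, z) ∈ R := fun hxz =>
    hR.superset hxz
  by_contra! hno
  let between : Set A := {z | (b, z) ∈ R ∧ (z, c) ∈ R}
  let r : A → A → Prop := fun w z => (z, w) ∈ R ∧ w ∈ between ∧ z ∈ between
  have : IsTrans A r := ⟨fun _ _ _ h h' => ⟨trans h'.1 h.1, h.2.1, h'.2.2⟩⟩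
  have : Std.Irrefl r := ⟨fun x h => hno x h.1 h.2.1.1 h.2.1.2⟩
  obtain ⟨z, hz, hmin⟩ := (Finite.wellFounded_of_trans_of_irrefl r).has_min between (dense hbc)
  obtain ⟨w, hzw, hwc⟩ := dense hz.2
  have hw : w ∈ between := ⟨trans hz.1 hzw, hwc⟩
  exact hmin w hw ⟨hzw, hw, hz⟩

lemma IsHMChain.mem_of_swap_mem (hp : IsHMChain n p) (hpR : ∀ k ≤ n, Pres3Rel (p k) R)
    (htrans : R ○ R ⊆ R) {x y : A} (hxx : (x, x) ∈ R) (hyy : (y, y) ∈ R) (hyx : (y, x) ∈ R) :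
    (x, y) ∈ R := by
  obtain ⟨-, hfst, hthd, hchain⟩ := hp
  have reach : ∀ k ≤ n, (x, p k x y y) ∈ R := by
    intro k
    induction k with
    | zero => exact fun _ => (hfst x y y).symm ▸ hxx
    | succ k ih =>
      intro hk
      have hstep : (p k x y y, p k x x y) ∈ R := hpR k (by omega) _ _ _ hxx hyx hyy
      exact htrans ⟨_, ih (by omega), hchain k hk x y ▸ hstep⟩
  exact hthd x y y ▸ reach n le_rfl

/-- If an edge of `R` enters `C` from outside, then so does an edge between two loops, because
every edge passes through a loop. The chain of terms reverses that edge, which thus leaves `C`. -/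
theorem IsHMChain.preimage_subset [Finite A] (hp : IsHMChain n p)
    (hpR : ∀ k ≤ n, Pres3Rel (p k) R) (hR : R ○ R = R) (hdom : R.dom = R.cod) {C : Set A}
    (hC : R.image C ⊆ C) : R.preimage C ⊆ C := by
  rintro b ⟨c, hcC, hbc⟩
  by_contra hbC
  obtain ⟨y, x, hyC, hxC, hyy, hxx, hyx⟩ :
      ∃ y x, y ∉ C ∧ x ∈ C ∧ (y, y) ∈ R ∧ (x, x) ∈ R ∧ (y, x) ∈ R := by
    obtain ⟨z, hzz, hbz, hzc⟩ := exists_loop_of_comp_self_eq hR hbc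
    by_cases hzC : z ∈ C
    · obtain ⟨a, hab⟩ : b ∈ R.cod := hdom.subset ⟨c, hbc⟩
      obtain ⟨y, hyy, -, hyb⟩ := exists_loop_of_comp_self_eq hR hab
      exact ⟨y, z, fun hy => hbC (hC ⟨y, hy, hyb⟩), hzC, hyy, hzz, hR.subset ⟨b, hyb, hbz⟩⟩
    · obtain ⟨d, hcd⟩ : c ∈ R.dom := hdom.superset ⟨b, hbc⟩
      obtain ⟨x, hxx, hcx, -⟩ := exists_loop_of_comp_self_eq hR hcd
      exact ⟨z, x, hzC, hC ⟨c, hcC, hcx⟩, hzz, hxx, hR.subset ⟨c, hzc, hcx⟩⟩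
  exact hyC (hC ⟨x, hxC, hp.mem_of_swap_mem hpR hR.subset hxx hyy hyx⟩)

end HagemannMitschke

section PathSolutions

open scoped SetRel

variable {A : Type} {P : PathInstance A} {a b c i j k u : ℕ} {r s t : ℕ → A}
  {q : A → A → A → A} {H : ℕ → Set A}

namespace PathInstance

/-- The values taken at position `j` by the solutions of the subinstance of `P` on `[a, b]`. -/
def values (P : PathInstance A) (a b j : ℕ) : Set A := {x | ∃ s, IsSolutionOn P a b s ∧ s j = x}

/-- The binary relation between positions `i` and `j` defined by the subinstance of `P`
on `[i, j]`. -/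
def link (P : PathInstance A) (i j : ℕ) : SetRel A A :=
  {q | ∃ s, IsSolutionOn P i j s ∧ s i = q.1 ∧ s j = q.2}

/-- The path instance `P` with its unary constraints replaced by `H`. -/
def restrict (P : PathInstance A) (H : ℕ → Set A) : PathInstance A := { P with B := H }

/-- The path instance `P` read backwards, position `j` becoming position `c - j`. -/
def reflect (P : PathInstance A) (c : ℕ) : PathInstance A where
  len := P.len
  B j := P.B (c - j)
  E j := {q | q.swap ∈ P.E (c - (j + 1))}

/-- The operation `q` preserves all constraints of the subinstance of `P` on `[a, b]`. -/
def PreservedOn (P : PathInstance A) (q : A → A → A → A) (a b : ℕ) : Prop :=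
  (∀ j, a ≤ j → j ≤ b → Pres3Set q (P.B j)) ∧ ∀ j, a ≤ j → j + 1 ≤ b → Pres3Rel q (P.E j)

end PathInstance

open PathInstance

namespace IsSolutionOn

lemma mono (hs : IsSolutionOn P a b s) (hi : a ≤ i) (hj : j ≤ b) : IsSolutionOn P i j s :=
  ⟨fun l hil hlj => hs.1 l (hi.trans hil) (hlj.trans hj),
    fun l hil hlj => hs.2 l (hi.trans hil) (hlj.trans hj)⟩

lemma glue (hs : IsSolutionOn P i j s) (ht : IsSolutionOn P j k t) (hst : s j = t j) :
    IsSolutionOn P i k (fun l => if l ≤ j then s l else t l) := by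
  refine ⟨fun l hil hlk => ?_, fun l hil hlk => ?_⟩
  · by_cases hlj : l ≤ j
    · simpa only [hlj, if_true] using hs.1 l hil hlj
    · simpa only [hlj, if_false] using ht.1 l (by omega) hlk
  · rcases lt_trichotomy l j with hlj | rfl | hlj
    · simpa only [hlj.le, Nat.succ_le_of_lt hlj, if_true] using hs.2 l hil hlj
    · simpa only [le_rfl, Nat.not_succ_le_self, if_true, if_false, hst] using ht.2 l le_rfl hlk
    · simpa only [hlj.not_ge, (hlj.trans l.lt_succ_self).not_ge, if_false]
        using ht.2 l hlj.le hlk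

lemma map₃_s15 (hq : P.PreservedOn q a b) (hr : IsSolutionOn P a b r) (hs : IsSolutionOn P a b s)
    (ht : IsSolutionOn P a b t) : IsSolutionOn P a b (fun l => q (r l) (s l) (t l)) :=
  ⟨fun l hal hlb => hq.1 l hal hlb _ _ _ (hr.1 l hal hlb) (hs.1 l hal hlb) (ht.1 l hal hlb),
    fun l hal hlb => hq.2 l hal hlb _ _ _ (hr.2 l hal hlb) (hs.2 l hal hlb) (ht.2 l hal hlb)⟩

lemma restrict (hs : IsSolutionOn P a b s) (hH : ∀ j, a ≤ j → j ≤ b → s j ∈ H j) :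
    IsSolutionOn (P.restrict H) a b s :=
  ⟨hH, hs.2⟩

lemma of_restrict (hs : IsSolutionOn (P.restrict H) a b s)
    (hH : ∀ j, a ≤ j → j ≤ b → H j ⊆ P.B j) : IsSolutionOn P a b s :=
  ⟨fun j haj hjb => hH j haj hjb (hs.1 j haj hjb), hs.2⟩

lemma reflect (hs : IsSolutionOn P a b s) (hab : a ≤ b) (hbc : b ≤ c) :
    IsSolutionOn (P.reflect c) (c - b) (c - a) (fun j => s (c - j)) := by
  refine ⟨fun j hbj hja => hs.1 (c - j) (by omega) (by omega), fun j hbj hja => ?_⟩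
  have hedge := hs.2 (c - (j + 1)) (by omega) (by omega)
  rwa [show c - (j + 1) + 1 = c - j by omega] at hedge

lemma of_reflect (hs : IsSolutionOn (P.reflect c) (c - b) (c - a) s) (hbc : b ≤ c) :
    IsSolutionOn P a b (fun j => s (c - j)) := by
  refine ⟨fun j haj hjb => ?_, fun j haj hjb => ?_⟩
  · have hmem : s (c - j) ∈ P.B (c - (c - j)) := hs.1 (c - j) (by omega) (by omega)
    rwa [show c - (c - j) = j by omega] at hmem
  · have hedge : (s (c - (j + 1) + 1), s (c - (j + 1))) ∈ P.E (c - (c - (j + 1) + 1)) :=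
      hs.2 (c - (j + 1)) (by omega) (by omega)
    rwa [show c - (j + 1) + 1 = c - j by omega, show c - (c - j) = j by omega] at hedge

end IsSolutionOn

namespace PathInstance

lemma values_subset (haj : a ≤ j) (hjb : j ≤ b) : P.values a b j ⊆ P.B j := by
  rintro _ ⟨s, hs, rfl⟩
  exact hs.1 j haj hjb

lemma values_anti (hi : a ≤ i) (hk : k ≤ b) : P.values a b j ⊆ P.values i k j := by
  rintro _ ⟨s, hs, rfl⟩
  exact ⟨s, hs.mono hi hk, rfl⟩

lemma values_self : P.values j j j = P.B j := by
  refine (values_subset le_rfl le_rfl).antisymm fun x hx => ⟨fun _ => x, ⟨?_, ?_⟩, rfl⟩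
  · intro i hji hij
    rwa [hij.antisymm hji]
  · intro i hji hij
    omega

lemma values_eq_values_self_right (haj : a ≤ j) (hjb : j ≤ b) (hP : P.B j ⊆ P.values j b j) :
    P.values a b j = P.values a j j := by
  refine (values_anti le_rfl hjb).antisymm ?_
  rintro _ ⟨s, hs, rfl⟩
  obtain ⟨t, ht, hts⟩ := hP (hs.1 j haj le_rfl)
  exact ⟨_, hs.glue ht hts.symm, if_pos le_rfl⟩

lemma mem_link_succ {x y : A} :
    (x, y) ∈ P.link j (j + 1) ↔ x ∈ P.B j ∧ y ∈ P.B (j + 1) ∧ (x, y) ∈ P.E j := by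
  constructor
  · rintro ⟨s, hs, rfl, rfl⟩
    exact ⟨hs.1 j le_rfl (by omega), hs.1 (j + 1) (by omega) le_rfl, hs.2 j le_rfl le_rfl⟩
  · rintro ⟨hx, hy, hxy⟩
    refine ⟨fun i => if i ≤ j then x else y, ⟨fun i hji hij => ?_, fun i hji hij => ?_⟩,
      if_pos le_rfl, if_neg (by omega)⟩
    · obtain rfl | rfl : i = j ∨ i = j + 1 := by omega
      · simpa only [le_rfl, if_true] using hx
      · simpa only [Nat.not_succ_le_self, if_false] using hy
    · obtain rfl : i = j := by omega
      simpa only [le_rfl, if_true, Nat.not_succ_le_self, if_false] using hxy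

lemma link_comp_link (hij : i ≤ j) (hjk : j ≤ k) : P.link i j ○ P.link j k = P.link i k := by
  ext ⟨x, z⟩
  constructor
  · rintro ⟨y, ⟨s, hs, rfl, hsj⟩, t, ht, htj, rfl⟩
    refine ⟨_, hs.glue ht (hsj.trans htj.symm), if_pos hij, ?_⟩
    rcases hjk.eq_or_lt with rfl | hjk
    · exact (if_pos le_rfl).trans (hsj.trans htj.symm)
    · exact if_neg hjk.not_ge
  · rintro ⟨s, hs, rfl, rfl⟩
    exact ⟨s j, ⟨s, hs.mono le_rfl hjk, rfl, rfl⟩, s, hs.mono hij le_rfl, rfl, rfl⟩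

lemma image_link_values (huj : u ≤ j) (hjk : j ≤ k) :
    (P.link j k).image (P.values u j j) = P.values u k k := by
  have values_eq : ∀ l, P.values u l l = (P.link u l).image Set.univ := fun l =>
    Set.ext fun x => ⟨fun ⟨s, hs, hx⟩ => ⟨s u, trivial, s, hs, rfl, hx⟩,
      fun ⟨_, _, s, hs, _, hx⟩ => ⟨s, hs, hx⟩⟩
  rw [values_eq, values_eq, ← SetRel.image_comp, link_comp_link huj hjk]

lemma mem_values_succ (huj : u ≤ j) {y : A} :
    y ∈ P.values u (j + 1) (j + 1) ↔
      y ∈ P.B (j + 1) ∧ ∃ x ∈ P.values u j j, (x, y) ∈ P.E j := by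
  rw [← image_link_values huj j.le_succ]
  constructor
  · rintro ⟨x, hx, hxy⟩
    obtain ⟨-, hy, hxy⟩ := mem_link_succ.mp hxy
    exact ⟨hy, x, hx, hxy⟩
  · rintro ⟨hy, x, hx, hxy⟩
    exact ⟨x, hx, mem_link_succ.mpr ⟨values_subset huj le_rfl hx, hy, hxy⟩⟩

lemma dom_link_eq (hai : a ≤ i) (hij : i ≤ j) (hjb : j ≤ b) (hP : P.B i ⊆ P.values a b i) :
    (P.link i j).dom = P.B i := by
  refine Set.Subset.antisymm ?_ fun x hx => ?_
  · rintro _ ⟨_, s, hs, rfl, -⟩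
    exact hs.1 i le_rfl hij
  · obtain ⟨s, hs, rfl⟩ := hP hx
    exact ⟨s j, s, hs.mono hai hjb, rfl, rfl⟩

lemma cod_link_eq (hai : a ≤ i) (hij : i ≤ j) (hjb : j ≤ b) (hP : P.B j ⊆ P.values a b j) :
    (P.link i j).cod = P.B j := by
  refine Set.Subset.antisymm ?_ fun x hx => ?_
  · rintro _ ⟨_, s, hs, -, rfl⟩
    exact hs.1 j hij le_rfl
  · obtain ⟨s, hs, rfl⟩ := hP hx
    exact ⟨s i, s, hs.mono hai hjb, rfl, rfl⟩

lemma subset_values_restrict_values :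
    P.values a b j ⊆ (P.restrict (P.values a b)).values a b j := by
  rintro _ ⟨s, hs, rfl⟩
  exact ⟨s, hs.restrict fun i _ _ => ⟨s, hs, rfl⟩, rfl⟩

lemma subset_values_restrict_values_self :
    P.values a j j ⊆ (P.restrict fun i => P.values a i i).values a j j := by
  rintro _ ⟨s, hs, rfl⟩
  exact ⟨s, hs.restrict fun i _ hij => ⟨s, hs.mono le_rfl hij, rfl⟩, rfl⟩

lemma values_restrict_values_self (haj : a ≤ j) (hjb : j ≤ b) :
    (P.restrict fun i => P.values a i i).values j b j = P.values a b j := by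
  refine Set.Subset.antisymm ?_ ?_
  · rintro _ ⟨t, ht, rfl⟩
    obtain ⟨s, hs, hst⟩ := ht.1 j le_rfl hjb
    have ht : IsSolutionOn P j b t := ht.of_restrict fun i hji _ =>
      values_subset (haj.trans hji) le_rfl
    exact ⟨_, hs.glue ht hst, (if_pos le_rfl).trans hst⟩
  · rintro _ ⟨s, hs, rfl⟩
    exact ⟨s, (hs.mono haj le_rfl).restrict fun i _ hib => ⟨s, hs.mono le_rfl hib, rfl⟩, rfl⟩

lemma values_reflect (haj : a ≤ j) (hjb : j ≤ b) (hbc : b ≤ c) :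
    (P.reflect c).values (c - b) (c - a) (c - j) = P.values a b j := by
  refine Set.Subset.antisymm ?_ ?_
  · rintro _ ⟨s, hs, rfl⟩
    exact ⟨_, hs.of_reflect hbc, rfl⟩
  · rintro _ ⟨s, hs, rfl⟩
    exact ⟨_, hs.reflect (haj.trans hjb) hbc, congrArg s (by omega)⟩

namespace PreservedOn

lemma mono (hP : P.PreservedOn q a b) (hi : a ≤ i) (hj : j ≤ b) : P.PreservedOn q i j :=
  ⟨fun l hil hlj => hP.1 l (hi.trans hil) (hlj.trans hj),
    fun l hil hlj => hP.2 l (hi.trans hil) (hlj.trans hj)⟩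

lemma values (hP : P.PreservedOn q a b) : Pres3Set q (P.values a b j) := by
  rintro _ _ _ ⟨r, hr, rfl⟩ ⟨s, hs, rfl⟩ ⟨t, ht, rfl⟩
  exact ⟨_, hr.map₃_s15 hP hs ht, rfl⟩

lemma link (hP : P.PreservedOn q i j) : Pres3Rel q (P.link i j) := by
  rintro ⟨_, _⟩ ⟨_, _⟩ ⟨_, _⟩ ⟨r, hr, rfl, rfl⟩ ⟨s, hs, rfl, rfl⟩ ⟨t, ht, rfl, rfl⟩
  exact ⟨_, hr.map₃_s15 hP hs ht, rfl, rfl⟩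

lemma restrict (hP : P.PreservedOn q a b) (hH : ∀ j, a ≤ j → j ≤ b → Pres3Set q (H j)) :
    (P.restrict H).PreservedOn q a b :=
  ⟨hH, hP.2⟩

lemma reflect (hP : P.PreservedOn q a b) (hab : a ≤ b) (hbc : b ≤ c) :
    (P.reflect c).PreservedOn q (c - b) (c - a) :=
  ⟨fun j hbj hja => hP.1 (c - j) (by omega) (by omega),
    fun j hbj hja _ _ _ hu hv hw => hP.2 (c - (j + 1)) (by omega) (by omega) _ _ _ hu hv hw⟩

end PreservedOn

end PathInstance

end PathSolutions

section BackwardEdges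

open scoped SetRel

variable {A : Type} {P : PathInstance A} {C : ℕ → Set A} {a b i j n : ℕ}
  {p : ℕ → A → A → A → A}

namespace PathInstance

/-- The sets `C j`, for `j ∈ [a, b]`, are closed under moving one position to the right
along `P`. -/
def IsForwardClosed (P : PathInstance A) (C : ℕ → Set A) (a b : ℕ) : Prop :=
  ∀ j, a ≤ j → j + 1 ≤ b → (P.link j (j + 1)).image (C j) ⊆ C (j + 1)

open Classical in
/-- The positions in `[a, b)` with a backward edge: an edge to the next position that enters the
family `C` from outside. -/
noncomputable def backwardIndices (P : PathInstance A) (C : ℕ → Set A) (a b : ℕ) : Finset ℕ :=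
  {i ∈ Finset.Ico a b | ¬ (P.link i (i + 1)).preimage (C (i + 1)) ⊆ C i}

lemma mem_backwardIndices : i ∈ P.backwardIndices C a b ↔
    (a ≤ i ∧ i < b) ∧ ¬ (P.link i (i + 1)).preimage (C (i + 1)) ⊆ C i := by
  simp only [backwardIndices, Finset.mem_filter, Finset.mem_Ico]

lemma IsForwardClosed.image_link_subset (hC : P.IsForwardClosed C a b) (hai : a ≤ i)
    (hij : i ≤ j) (hjb : j ≤ b) : (P.link i j).image (C i) ⊆ C j := by
  induction j, hij using Nat.le_induction with
  | base =>
    rintro _ ⟨x, hx, s, -, rfl, rfl⟩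
    exact hx
  | succ j hij ih =>
    rw [← link_comp_link hij j.le_succ, SetRel.image_comp]
    exact (SetRel.image_mono (ih (by omega))).trans (hC j (hai.trans hij) hjb)

end PathInstance

open PathInstance

/-- A bound, depending on the domain only, on the number of backward edges of a consistent path
instance preserved by a chain of Hagemann–Mitschke terms. -/
noncomputable def backwardBound (A : Type) : ℕ :=
  triangleBound (Nat.card (Set A × SetRel A A))

/-- Colour the pairs `i < j` of backward positions by `(C i, link i j)`. A monochromatic triangle
yields an idempotent relation `link i j`, no edge of which enters `C i` from outside. -/
theorem IsHMChain.card_backwardIndices_le [Finite A] (hp : IsHMChain n p)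
    (hP : ∀ k ≤ n, P.PreservedOn (p k) a b)
    (hcons : ∀ j, a ≤ j → j ≤ b → P.B j ⊆ P.values a b j) (hC : P.IsForwardClosed C a b) :
    (P.backwardIndices C a b).card ≤ backwardBound A := by
  have := Fintype.ofFinite (Set A × SetRel A A)
  by_contra! hcard
  rw [backwardBound, Nat.card_eq_fintype_card] at hcard
  obtain ⟨i, hi, j, -, k, hk, hij, hjk, hijk, hijjk⟩ := exists_monochromatic_triangle
    Finset.univ _ (fun i j => (C i, P.link i j)) hcard (fun _ _ _ _ _ => Finset.mem_univ _)
  obtain ⟨⟨hai, -⟩, hback⟩ := mem_backwardIndices.mp hi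
  have hkb : k < b := (mem_backwardIndices.mp hk).1.2
  have hCij : C i = C j := congrArg Prod.fst hijjk
  have hlink_ik : P.link i j = P.link i k := congrArg Prod.snd hijk
  have hlink_jk : P.link i j = P.link j k := congrArg Prod.snd hijjk
  have hcomp : P.link i j ○ P.link i j = P.link i j :=
    calc P.link i j ○ P.link i j = P.link i j ○ P.link j k := by rw [← hlink_jk]
      _ = P.link i j := by rw [link_comp_link hij.le hjk.le, hlink_ik]
  have hdom : (P.link i j).dom = (P.link i j).cod := by
    rw [cod_link_eq hai hij.le (by omega) (hcons j (by omega) (by omega)), hlink_jk,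
      dom_link_eq (by omega) hjk.le hkb.le (hcons j (by omega) (by omega))]
  have hclosed : (P.link i j).image (C i) ⊆ C i :=
    (hC.image_link_subset hai hij.le (by omega)).trans hCij.superset
  have hpre : (P.link i j).preimage (C i) ⊆ C i :=
    hp.preimage_subset (fun k hk => ((hP k hk).mono hai (by omega)).link) hcomp hdom hclosed
  refine hback fun x ⟨y, hyC, hxy⟩ => hpre ?_
  obtain ⟨z, hyz⟩ : y ∈ (P.link (i + 1) j).dom := by
    rw [dom_link_eq (by omega) hij (by omega) (hcons (i + 1) (by omega) (by omega))]
    exact (mem_link_succ.mp hxy).2.1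
  refine ⟨z, ?_, (link_comp_link i.le_succ hij).subset ⟨y, hxy, hyz⟩⟩
  exact hCij ▸ hC.image_link_subset (by omega) hij (by omega) ⟨y, hyC, hyz⟩

end BackwardEdges

section ReversibleDerivations

open Finset

variable {A V : Type} {I : Instance A V} {P Q R : (V → A) → Prop} {W : Finset V} {m m' : ℕ}

lemma dependsOn_and {ι β : Type*} {P Q : (ι → β) → Prop} {s : Set ι} (hP : DependsOn P s)
    (hQ : DependsOn Q s) : DependsOn (fun f => P f ∧ Q f) s :=
  fun _ _ hfg => congrArg₂ And (hP hfg) (hQ hfg)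

lemma dependsOn_apply_mem {ι β : Type*} {s : Set ι} {i : ι} (hi : i ∈ s) (S : Set β) :
    DependsOn (fun f : ι → β => f i ∈ S) s :=
  fun _ _ hfg => congrArg (· ∈ S) (hfg i hi)

/-- The assignment `f` satisfies every constraint of `I` whose scope lies in `W`. -/
def Instance.SatOn (I : Instance A V) (W : Set V) (f : V → A) : Prop :=
  ∀ c ∈ I.constraints, Set.range c.2.1 ⊆ W → (fun i => f (c.2.1 i)) ∈ c.2.2

lemma Instance.SatOn.mono {W' : Set V} {f : V → A} (hf : I.SatOn W f) (hW : W' ⊆ W) :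
    I.SatOn W' f :=
  fun c hc hcW => hf c hc (hcW.trans hW)

/-- A reversible inference on `I`: two properties of assignments which only concern at most `m`
variables, and are equivalent under the constraints between these variables. Properties of
assignments stand for the relations that a symmetric Datalog program derives, and `m` for half the
number of variables of the rule. -/
def ReversibleStep (I : Instance A V) (m : ℕ) (P Q : (V → A) → Prop) : Prop :=
  ∃ W : Finset V, #W ≤ m ∧ DependsOn P W ∧ DependsOn Q W ∧ ∀ f, I.SatOn W f → (P f ↔ Q f)

/-- A chain of reversible inferences with at most `m` variables each. -/
def ReversiblyEquiv (I : Instance A V) (m : ℕ) : ((V → A) → Prop) → ((V → A) → Prop) → Prop :=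
  Relation.ReflTransGen (ReversibleStep I m)

/-- `P` is obtained from the trivial property by reversible inferences with at most `m` variables
each. -/
def Derivable (I : Instance A V) (m : ℕ) (P : (V → A) → Prop) : Prop :=
  ReversiblyEquiv I m (fun _ => True) P

lemma ReversiblyEquiv.mono (h : ReversiblyEquiv I m P Q) (hm : m ≤ m') :
    ReversiblyEquiv I m' P Q :=
  Relation.ReflTransGen.mono (fun _ _ ⟨W, hW, h⟩ => ⟨W, hW.trans hm, h⟩) _ _ h

lemma Derivable.mono (h : Derivable I m P) (hm : m ≤ m') : Derivable I m' P :=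
  ReversiblyEquiv.mono h hm

lemma ReversiblyEquiv.symm (h : ReversiblyEquiv I m P Q) : ReversiblyEquiv I m Q P := by
  have : Std.Symm (ReversibleStep I m) :=
    ⟨fun _ _ ⟨W, hW, hP, hQ, h⟩ => ⟨W, hW, hQ, hP, fun f hf => (h f hf).symm⟩⟩
  exact Std.Symm.symm (r := Relation.ReflTransGen (ReversibleStep I m)) _ _ h

lemma ReversiblyEquiv.and_right (h : ReversiblyEquiv I m P Q) (hR : DependsOn R W) :
    ReversiblyEquiv I (m + #W) (fun f => P f ∧ R f) (fun f => Q f ∧ R f) := by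
  classical
  refine Relation.ReflTransGen.lift (fun P f => P f ∧ R f) ?_ _ _ h
  rintro P Q ⟨U, hU, hP, hQ, hPQ⟩
  have hUW : (U : Set V) ⊆ ↑(U ∪ W) := coe_subset.mpr subset_union_left
  have hR : DependsOn R ↑(U ∪ W) := hR.mono (coe_subset.mpr subset_union_right)
  exact ⟨U ∪ W, (card_union_le U W).trans (by omega), dependsOn_and (hP.mono hUW) hR,
    dependsOn_and (hQ.mono hUW) hR, fun f hf => and_congr_left' (hPQ f (hf.mono hUW))⟩

namespace Derivable

lemma reversiblyEquiv_and (hP : Derivable I m P) (hQ : DependsOn Q W) :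
    ReversiblyEquiv I (m + #W) Q (fun f => P f ∧ Q f) := by
  simpa only [true_and] using ReversiblyEquiv.and_right hP hQ

lemma and (hP : Derivable I m P) (hQ : Derivable I m' Q) (hQW : DependsOn Q W) :
    Derivable I (m + m' + #W) (fun f => P f ∧ Q f) :=
  (hQ.mono (by omega)).trans ((hP.reversiblyEquiv_and hQW).mono (by omega))

lemma reversiblyEquiv_of_iff (hR : Derivable I m R) (hRW : DependsOn R W) (hP : DependsOn P W)
    (hQ : DependsOn Q W) (hPQ : ∀ f, I.SatOn W f → R f → (P f ↔ Q f)) :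
    ReversiblyEquiv I (m + #W) P Q := by
  have step : ReversiblyEquiv I (m + #W) (fun f => R f ∧ P f) (fun f => R f ∧ Q f) :=
    .single ⟨W, Nat.le_add_left _ _, dependsOn_and hRW hP, dependsOn_and hRW hQ,
      fun f hf => and_congr_right (hPQ f hf)⟩
  exact ((hR.reversiblyEquiv_and hP).trans step).trans (hR.reversiblyEquiv_and hQ).symm

lemma imp (hP : Derivable I m P) (hPW : DependsOn P W) (hQ : DependsOn Q W)
    (hPQ : ∀ f, I.SatOn W f → P f → Q f) : Derivable I (m + #W) Q :=
  hP.reversiblyEquiv_of_iff hPW ((dependsOn_const True).mono (Set.empty_subset _)) hQ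
    fun f hf hPf => iff_of_true trivial (hPQ f hf hPf)

end Derivable

end ReversibleDerivations

section DerivedPaths

open PathInstance Finset
open scoped SetRel

variable {A V : Type} {I : Instance A V} {P : PathInstance A} {C : ℕ → Set A} {v : ℕ → V}
  {a b j m m' : ℕ}

/-- The subinstance of `P` on `[a, b]`, its position `j` being the variable `v j` of `I`: the unary
constraints are derivable from `I` in memory `m`, and the binary ones are implied by the
constraints of `I` on two successive variables. -/
structure IsDerivedPath (I : Instance A V) (m : ℕ) (v : ℕ → V) (P : PathInstance A) (a b : ℕ) :
    Prop where
  derivable : ∀ j, a ≤ j → j ≤ b → Derivable I m (fun f => f (v j) ∈ P.B j)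
  edge : ∀ j, a ≤ j → j + 1 ≤ b → ∀ f, I.SatOn {v j, v (j + 1)} f →
    (f (v j), f (v (j + 1))) ∈ P.E j

/-- The property carried along the path by a propagation of `C`. Besides the current position it
remembers the earlier positions with a backward edge, so that every move can be undone. -/
def PropagationState (P : PathInstance A) (C : ℕ → Set A) (a b : ℕ) (v : ℕ → V) (j : ℕ)
    (f : V → A) : Prop :=
  f (v j) ∈ C j ∧ ∀ i ∈ P.backwardIndices C a b, i < j → f (v i) ∈ C i

namespace PropagationState

lemma start_eq : PropagationState P C a b v a = fun f => f (v a) ∈ C a :=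
  funext fun _ => propext ⟨And.left, fun h =>
    ⟨h, fun _ hi hia => absurd (mem_backwardIndices.mp hi).1.1 hia.not_ge⟩⟩

lemma succ_iff (hC : P.IsForwardClosed C a b) (haj : a ≤ j) (hjb : j + 1 ≤ b) {f : V → A}
    (hf : (f (v j), f (v (j + 1))) ∈ P.link j (j + 1)) :
    PropagationState P C a b v j f ↔ PropagationState P C a b v (j + 1) f := by
  constructor
  · rintro ⟨hj, hback⟩
    refine ⟨hC j haj hjb ⟨_, hj, hf⟩, fun i hi hij => ?_⟩
    rcases (Nat.lt_succ_iff.mp hij).eq_or_lt with rfl | hij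
    exacts [hj, hback i hi hij]
  · rintro ⟨hj, hback⟩
    refine ⟨?_, fun i hi hij => hback i hi (by omega)⟩
    by_cases hjback : j ∈ P.backwardIndices C a b
    · exact hback j hjback j.lt_succ_self
    · by_contra hjC
      exact hjback (mem_backwardIndices.mpr ⟨⟨haj, hjb⟩, fun hpre => hjC (hpre ⟨_, hj, hf⟩)⟩)

lemma dependsOn [DecidableEq V] {W : Set V} (hback : ↑((P.backwardIndices C a b).image v) ⊆ W)
    (hj : v j ∈ W) : DependsOn (PropagationState P C a b v j) W := by
  intro f g hfg
  have hcongr : ∀ i ∈ P.backwardIndices C a b, f (v i) = g (v i) := fun i hi =>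
    hfg _ (hback (mem_coe.mpr (mem_image_of_mem v hi)))
  simp +contextual only [PropagationState, hfg _ hj, hcongr]

end PropagationState

namespace IsDerivedPath

lemma mono (h : IsDerivedPath I m v P a b) {i k : ℕ} (hi : a ≤ i) (hk : k ≤ b) :
    IsDerivedPath I m v P i k :=
  ⟨fun j hij hjk => h.derivable j (hi.trans hij) (hjk.trans hk),
    fun j hij hjk => h.edge j (hi.trans hij) (hjk.trans hk)⟩

lemma restrict (h : IsDerivedPath I m v P a b) {H : ℕ → Set A}
    (hH : ∀ j, a ≤ j → j ≤ b → Derivable I m' (fun f => f (v j) ∈ H j)) :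
    IsDerivedPath I m' v (P.restrict H) a b :=
  ⟨hH, h.edge⟩

lemma reflect (h : IsDerivedPath I m v P a b) {c : ℕ} (hab : a ≤ b) (hbc : b ≤ c) :
    IsDerivedPath I m (fun j => v (c - j)) (P.reflect c) (c - b) (c - a) := by
  refine ⟨fun j hbj hja => h.derivable (c - j) (by omega) (by omega), fun j hbj hja f hf => ?_⟩
  have hedge := h.edge (c - (j + 1)) (by omega) (by omega) f
  rw [show c - (j + 1) + 1 = c - j by omega, Set.pair_comm] at hedge
  exact hedge hf

lemma derivable_pair (h : IsDerivedPath I m v P a b) (haj : a ≤ j) (hjb : j + 1 ≤ b) :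
    Derivable I (2 * m + 1) (fun f => f (v j) ∈ P.B j ∧ f (v (j + 1)) ∈ P.B (j + 1)) := by
  refine ((h.derivable j haj (by omega)).and (h.derivable (j + 1) (by omega) hjb)
    (W := {v (j + 1)}) (dependsOn_apply_mem (mem_coe.mpr (mem_singleton_self _)) _)).mono ?_
  rw [card_singleton]
  omega

lemma mem_link (h : IsDerivedPath I m v P a b) (haj : a ≤ j) (hjb : j + 1 ≤ b) {f : V → A}
    (hf : I.SatOn {v j, v (j + 1)} f)
    (hB : f (v j) ∈ P.B j ∧ f (v (j + 1)) ∈ P.B (j + 1)) :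
    (f (v j), f (v (j + 1))) ∈ P.link j (j + 1) :=
  mem_link_succ.mpr ⟨hB.1, hB.2, h.edge j haj hjb f hf⟩

lemma propagationState_step (h : IsDerivedPath I m v P a b) (hC : P.IsForwardClosed C a b)
    (haj : a ≤ j) (hjb : j + 1 ≤ b) :
    ReversiblyEquiv I (2 * m + 3 + #(P.backwardIndices C a b))
      (PropagationState P C a b v j) (PropagationState P C a b v (j + 1)) := by
  classical
  let W : Finset V := {v j, v (j + 1)} ∪ (P.backwardIndices C a b).image v
  have hback : ((P.backwardIndices C a b).image v : Set V) ⊆ W := coe_subset.mpr subset_union_right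
  have hj : v j ∈ (W : Set V) := mem_coe.mpr (mem_union_left _ (mem_insert_self _ _))
  have hj' : v (j + 1) ∈ (W : Set V) :=
    mem_coe.mpr (mem_union_left _ (mem_insert_of_mem (mem_singleton_self _)))
  have hcard : #W ≤ 2 + #(P.backwardIndices C a b) :=
    (card_union_le _ _).trans (add_le_add card_le_two card_image_le)
  refine ((h.derivable_pair haj hjb).reversiblyEquiv_of_iff
    (dependsOn_and (dependsOn_apply_mem hj _) (dependsOn_apply_mem hj' _))
    (PropagationState.dependsOn hback hj) (PropagationState.dependsOn hback hj')
    fun f hf hB => ?_).mono (by omega)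
  exact PropagationState.succ_iff hC haj hjb
    (h.mem_link haj hjb (hf.mono (Set.pair_subset hj hj')) hB)

theorem derivable_of_isForwardClosed (h : IsDerivedPath I m v P a b) (hab : a ≤ b)
    (hC : P.IsForwardClosed C a b) (ha : Derivable I m' (fun f => f (v a) ∈ C a)) :
    Derivable I (m' + 2 * m + 2 * #(P.backwardIndices C a b) + 4)
      (fun f => f (v b) ∈ C b) := by
  classical
  have chain : ∀ j, a ≤ j → j ≤ b →
      Derivable I (m' + (2 * m + 3 + #(P.backwardIndices C a b)))
        (PropagationState P C a b v j) := by
    intro j haj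
    induction j, haj using Nat.le_induction with
    | base => exact fun _ => PropagationState.start_eq ▸ ha.mono (Nat.le_add_right _ _)
    | succ j haj ih =>
      exact fun hjb => (ih (by omega)).trans
        ((h.propagationState_step hC haj hjb).mono (by omega))
  let W : Finset V := insert (v b) ((P.backwardIndices C a b).image v)
  have hb : v b ∈ (W : Set V) := mem_coe.mpr (mem_insert_self _ _)
  have hcard : #W ≤ #(P.backwardIndices C a b) + 1 :=
    (card_insert_le _ _).trans (Nat.add_le_add_right card_image_le 1)
  refine ((chain b hab le_rfl).imp (W := W)
    (PropagationState.dependsOn (coe_subset.mpr (subset_insert _ _)) hb)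
    (dependsOn_apply_mem hb _) fun f _ hf => hf.1).mono ?_
  omega

end IsDerivedPath

end DerivedPaths

section ReachableValues

open PathInstance
open scoped SetRel

variable {A V : Type} {I : Instance A V} {P : PathInstance A} {v : ℕ → V}
  {a b j m m₀ n t u : ℕ} {p : ℕ → A → A → A → A}

/-- The memory in which the values reachable from position `u` are derived along a path derived in
memory `m₀`, when the values taken by the solutions to the right of `u` are derived in
memory `m`. -/
noncomputable def stepBound (A : Type) (m₀ m : ℕ) : ℕ := 2 * m₀ + 2 * m + 2 * backwardBound A + 7

lemma le_stepBound (m₀ m : ℕ) : m ≤ stepBound A m₀ m := by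
  unfold stepBound
  omega

/-- The memory used on a path whose every value starts a solution to the right end. -/
noncomputable def innerBound (A : Type) (m₀ : ℕ) : ℕ := (stepBound A m₀)^[Nat.card A] m₀

/-- The memory used on an arbitrary path. -/
noncomputable def outerBound (A : Type) (m₀ : ℕ) : ℕ :=
  (fun m => stepBound A m₀ (innerBound A m))^[Nat.card A] m₀

lemma exists_maximal_values_eq (hut : u ≤ t) :
    ∃ w, u ≤ w ∧ w ≤ t ∧ P.values u t t = P.values w t t ∧
      ∀ w', w < w' → w' ≤ t → P.values w t t ≠ P.values w' t t := by
  have hfin : {w | u ≤ w ∧ w ≤ t ∧ P.values u t t = P.values w t t}.Finite :=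
    (Set.finite_Iic t).subset fun w hw => hw.2.1
  obtain ⟨w, ⟨huw, hwt, hw⟩, hmax⟩ := hfin.exists_maximal ⟨u, le_rfl, hut, rfl⟩
  exact ⟨w, huw, hwt, hw, fun w' hww' hw't heq => hww'.not_ge
    (hmax ⟨huw.trans hww'.le, hw't, hw.trans heq⟩ hww'.le)⟩

namespace IsDerivedPath

variable [Finite A]

/-- The solutions to the right of `u` take values in a consistent path, on which the values
reachable from `u` are propagated. -/
theorem derivable_values_of_succ (h : IsDerivedPath I m₀ v P u t) (hp : IsHMChain n p)
    (hP : ∀ k ≤ n, P.PreservedOn (p k) u t) (hut : u < t)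
    (hd : ∀ j, u + 1 ≤ j → j ≤ t → Derivable I m (fun f => f (v j) ∈ P.values (u + 1) t j)) :
    Derivable I (stepBound A m₀ m) (fun f => f (v t) ∈ P.values u t t) := by
  classical
  let Q := P.restrict (P.values (u + 1) t)
  let C : ℕ → Set A := fun j => P.values u j j
  have hQ : IsDerivedPath I m v Q (u + 1) t := (h.mono u.le_succ le_rfl).restrict hd
  have hQP : ∀ k ≤ n, Q.PreservedOn (p k) (u + 1) t := fun k hk =>
    have hPk := (hP k hk).mono u.le_succ le_rfl
    hPk.restrict fun _ _ _ => hPk.values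
  have hC : Q.IsForwardClosed C (u + 1) t := by
    rintro j huj hjt y ⟨x, hx, hxy⟩
    obtain ⟨-, hy, hxy⟩ := mem_link_succ.mp hxy
    exact (mem_values_succ (by omega)).mpr ⟨values_subset (by omega) hjt hy, x, hx, hxy⟩
  have hstart : Derivable I (2 * m₀ + 3) (fun f => f (v (u + 1)) ∈ C (u + 1)) := by
    have hmem : v u ∈ (({v u, v (u + 1)} : Finset V) : Set V) := by simp
    have hmem' : v (u + 1) ∈ (({v u, v (u + 1)} : Finset V) : Set V) := by simp
    refine ((h.derivable_pair le_rfl hut).imp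
      (dependsOn_and (dependsOn_apply_mem hmem _) (dependsOn_apply_mem hmem' _))
      (dependsOn_apply_mem hmem' _) fun f hf hB => ?_).mono
        (Nat.add_le_add_left Finset.card_le_two _)
    refine (mem_values_succ le_rfl).mpr ⟨hB.2, f (v u), values_self.superset hB.1, ?_⟩
    exact h.edge u le_rfl hut f (hf.mono (Set.pair_subset hmem hmem'))
  have hcard : (Q.backwardIndices C (u + 1) t).card ≤ backwardBound A :=
    hp.card_backwardIndices_le hQP (fun _ _ _ => subset_values_restrict_values) hC
  refine (hQ.derivable_of_isForwardClosed hut hC hstart).mono ?_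
  unfold stepBound
  omega

/-- If `u` is the last position from which the same values are reached at `t`, then at every
position in between strictly more values are reachable from `u + 1` than from `u`. Hence the
number of applications of `hstep` is at most the size of the domain. -/
theorem derivable_values_of_step (h : IsDerivedPath I m₀ v P a b) (φ : ℕ → ℕ) (hφ : id ≤ φ)
    (hstep : ∀ m u t, a ≤ u → u < t → t ≤ b →
      (∀ j, u + 1 ≤ j → j ≤ t → Derivable I m (fun f => f (v j) ∈ P.values (u + 1) j j)) →
      Derivable I (φ m) (fun f => f (v t) ∈ P.values u t t))
    (hau : a ≤ u) (hut : u ≤ t) (htb : t ≤ b) :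
    Derivable I (φ^[Nat.card A] m₀) (fun f => f (v t) ∈ P.values u t t) := by
  suffices main : ∀ k u t, a ≤ u → u ≤ t → t ≤ b →
      (∀ j, u ≤ j → j ≤ t → (P.values u j j)ᶜ.ncard ≤ k) →
      Derivable I (φ^[k] m₀) (fun f => f (v t) ∈ P.values u t t) from
    main _ u t hau hut htb fun _ _ _ => Set.ncard_le_card _
  intro k
  induction k with
  | zero =>
    intro u t hau hut htb hk
    have huniv : P.values u t t = Set.univ := Set.compl_empty_iff.mp
      ((Set.ncard_eq_zero (Set.toFinite _)).mp (Nat.le_zero.mp (hk t hut le_rfl)))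
    have hB : P.B t = P.values u t t :=
      (huniv ▸ Set.subset_univ _ : P.B t ⊆ P.values u t t).antisymm (values_subset hut le_rfl)
    exact hB ▸ h.derivable t (hau.trans hut) htb
  | succ k ih =>
    intro u t hau hut htb hk
    obtain ⟨w, huw, hwt, hw, hmax⟩ := exists_maximal_values_eq (P := P) hut
    rw [hw]
    rcases hwt.eq_or_lt with rfl | hwt
    · rw [values_self]
      exact (h.derivable w (by omega) htb).mono (Function.id_le_iterate_of_id_le hφ _ _)
    rw [Function.iterate_succ_apply']
    refine hstep _ w t (by omega) hwt htb fun j hwj hjt =>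
      ih (w + 1) j (by omega) hwj (by omega) fun i hwi hij => ?_
    have hlt : P.values w i i ⊂ P.values (w + 1) i i := by
      refine (values_anti w.le_succ le_rfl).ssubset_of_ne fun heq =>
        hmax (w + 1) w.lt_succ_self hwt ?_
      rw [← image_link_values (j := i) (by omega) (by omega), heq,
        image_link_values hwi (by omega)]
    have hlt : (P.values (w + 1) i i)ᶜ ⊂ (P.values u i i)ᶜ :=
      compl_lt_compl_iff_lt.mpr ((values_anti huw le_rfl).trans_ssubset hlt)
    exact Nat.lt_succ_iff.mp ((Set.ncard_lt_ncard hlt (Set.toFinite _)).trans_le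
      (hk i (by omega) (by omega)))

theorem derivable_values_of_subset_values (h : IsDerivedPath I m₀ v P a b) (hp : IsHMChain n p)
    (hP : ∀ k ≤ n, P.PreservedOn (p k) a b)
    (hright : ∀ j, a ≤ j → j ≤ b → P.B j ⊆ P.values j b j)
    (hau : a ≤ u) (hut : u ≤ t) (htb : t ≤ b) :
    Derivable I (innerBound A m₀) (fun f => f (v t) ∈ P.values u t t) := by
  refine h.derivable_values_of_step _ (le_stepBound m₀) (fun m u t hau hut htb hd => ?_)
    hau hut htb
  refine (h.mono hau htb).derivable_values_of_succ hp (fun k hk => (hP k hk).mono hau htb) hut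
    fun j huj hjt => ?_
  rw [values_eq_values_self_right huj hjt
    ((hright j (by omega) (by omega)).trans (values_anti le_rfl htb))]
  exact hd j huj hjt

/-- Read backwards, the path restricted to the values reachable from the left end satisfies the
hypothesis `hright` of the previous theorem. -/
theorem derivable_values_of_derivable_values_self (h : IsDerivedPath I m₀ v P a b)
    (hp : IsHMChain n p) (hP : ∀ k ≤ n, P.PreservedOn (p k) a b)
    (hd : ∀ j, a ≤ j → j ≤ b → Derivable I m (fun f => f (v j) ∈ P.values a j j))
    (haj : a ≤ j) (hjb : j ≤ b) :
    Derivable I (innerBound A m) (fun f => f (v j) ∈ P.values a b j) := by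
  let Q := P.restrict fun i => P.values a i i
  have hab : a ≤ b := haj.trans hjb
  have hQP : ∀ k ≤ n, Q.PreservedOn (p k) a b := fun k hk =>
    (hP k hk).restrict fun _ _ hib => ((hP k hk).mono le_rfl hib).values
  have hright : ∀ i, b - b ≤ i → i ≤ b - a →
      (Q.reflect b).B i ⊆ (Q.reflect b).values i (b - a) i := by
    intro i _ hia
    have hreflect : (Q.reflect b).values i (b - a) i = Q.values a (b - i) (b - i) := by
      rw [← values_reflect (c := b) (by omega) le_rfl (Nat.sub_le b i)]
      congr 1 <;> omega
    exact hreflect ▸ subset_values_restrict_values_self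
  have hderived := (h.restrict hd).reflect hab le_rfl |>.derivable_values_of_subset_values hp
    (fun k hk => (hQP k hk).reflect hab le_rfl) hright le_rfl (Nat.sub_le_sub_left hjb b)
    (Nat.sub_le_sub_left haj b)
  rw [values_reflect le_rfl hjb le_rfl, values_restrict_values_self haj hjb] at hderived
  rwa [show b - (b - j) = j by omega] at hderived

theorem derivable_values (h : IsDerivedPath I m₀ v P a b) (hp : IsHMChain n p)
    (hP : ∀ k ≤ n, P.PreservedOn (p k) a b) (hau : a ≤ u) (hut : u ≤ t) (htb : t ≤ b) :
    Derivable I (outerBound A m₀) (fun f => f (v t) ∈ P.values u t t) := by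
  have hφ : id ≤ fun m => stepBound A m₀ (innerBound A m) := fun m =>
    (Function.id_le_iterate_of_id_le (le_stepBound m) _ m).trans (le_stepBound m₀ _)
  refine h.derivable_values_of_step _ hφ (fun m u t hau hut htb hd => ?_) hau hut htb
  exact (h.mono hau htb).derivable_values_of_succ hp (fun k hk => (hP k hk).mono hau htb) hut
    fun j huj hjt => (h.mono (by omega) htb).derivable_values_of_derivable_values_self hp
      (fun k hk => (hP k hk).mono (by omega) htb) hd huj hjt

end IsDerivedPath

end ReachableValues

section SymmetricDatalog

open Finset

variable {A V : Type} {𝔸 : RelStruct A} {I : Instance A V} {P : (V → A) → Prop} {W : Finset V}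
  {m n n' r : ℕ} {ρ : Fin n → V} {ρ' : Fin n' → V}

lemma exists_leftInvOn_fin [Nonempty V] [NeZero r] (hW : #W ≤ r) :
    ∃ (idx : V → Fin r) (ω : Fin r → V), Set.LeftInvOn ω idx W := by
  obtain ⟨idx, -, hidx⟩ := W.finite_toSet.exists_injOn_of_encard_le (t := (Set.univ : Set (Fin r)))
    (by simpa [Set.encard_coe_eq_coe_finsetCard] using hW)
  exact ⟨idx, _, hidx.leftInvOn_invFunOn⟩

/-- The atoms that become constraints of `I` when the variables of a rule are evaluated by `ω`. -/
def Instance.atoms (I : Instance A V) (ω : Fin r → V) : Set (Atom A r) :=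
  {a | ⟨a.arity, fun i => ω (a.scope i), a.rel⟩ ∈ I.constraints}

lemma Instance.finite_atoms [Finite A] (hI : ∀ c ∈ I.constraints, c.1 ≤ r) (ω : Fin r → V) :
    (I.atoms ω).Finite := by
  refine (Set.finite_range fun c : Σ n : Fin (r + 1), (Fin n → Fin r) × Set (Fin n → A) =>
    (⟨c.1, c.2.1, c.2.2⟩ : Atom A r)).subset fun a ha => ?_
  exact ⟨⟨⟨a.arity, Nat.lt_succ_of_le (hI _ ha)⟩, a.scope, a.rel⟩, rfl⟩

lemma Instance.satOn_of_forall_atoms {ω : Fin r → V} {idx : V → Fin r}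
    (hω : Set.LeftInvOn ω idx W) {f : Fin r → A} (hf : ∀ a ∈ I.atoms ω, a.holds f) :
    I.SatOn W (f ∘ idx) := by
  intro c hc hcW
  have hscope : (fun i => ω (idx (c.2.1 i))) = c.2.1 := funext fun i => hω (hcW ⟨i, rfl⟩)
  refine hf ⟨c.1, idx ∘ c.2.1, c.2.2⟩ ?_
  simpa only [Instance.atoms, Set.mem_ofPred_eq, Function.comp_apply, hscope] using hc

namespace Derives

lemma of_forall [Nonempty V] [NeZero r] (hn : n ≤ r) {R : Set (Fin n → A)}
    (hR : ∀ f : V → A, f ∘ ρ ∈ R) : Derives 𝔸 r I ρ R := by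
  classical
  obtain ⟨idx, ω, hω⟩ := exists_leftInvOn_fin (W := univ.image ρ) (r := r)
    (card_image_le.trans ((card_fin n).trans_le hn))
  have hρ : ω ∘ idx ∘ ρ = ρ := funext fun i => hω (by simp)
  let rule : Rule A 𝔸 r :=
    { head := ⟨n, idx ∘ ρ, R⟩
      idb := none
      edb := []
      head_arity := hn
      idb_arity := by simp
      edb_arity := by simp
      edb_basic := by simp
      nodup := List.nodup_nil
      consistent := fun f _ _ => hR (f ∘ idx)
      mirror := by simp }
  exact hρ ▸ Derives.step (I := I) rule ω (by simp [rule]) (by simp [rule])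

/-- The rule has all constraints of `I` between the variables `W` in its body. -/
lemma of_iff [Finite A] [Nonempty V] [NeZero r] (hI : IsCSPInstance 𝔸 I)
    (hr : ∀ c ∈ I.constraints, c.1 ≤ r) (hW : #W ≤ r) (hn : n ≤ r) (hn' : n' ≤ r)
    (hρ : Set.range ρ ⊆ W) (hρ' : Set.range ρ' ⊆ W) {R : Set (Fin n → A)} {R' : Set (Fin n' → A)}
    (hRR' : ∀ f, I.SatOn W f → (f ∘ ρ ∈ R ↔ f ∘ ρ' ∈ R')) (h : Derives 𝔸 r I ρ R) :
    Derives 𝔸 r I ρ' R' := by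
  obtain ⟨idx, ω, hω⟩ := exists_leftInvOn_fin hW
  have hρ : ω ∘ idx ∘ ρ = ρ := funext fun i => hω (hρ ⟨i, rfl⟩)
  have hρ' : ω ∘ idx ∘ ρ' = ρ' := funext fun i => hω (hρ' ⟨i, rfl⟩)
  have hmem : ∀ a, a ∈ (I.finite_atoms hr ω).toFinset.toList ↔ a ∈ I.atoms ω := by simp
  have hiff : ∀ f : Fin r → A, (∀ a ∈ (I.finite_atoms hr ω).toFinset.toList, a.holds f) →
      ((f ∘ idx) ∘ ρ ∈ R ↔ (f ∘ idx) ∘ ρ' ∈ R') := fun f hf =>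
    hRR' _ (I.satOn_of_forall_atoms hω fun a ha => hf a ((hmem a).mpr ha))
  let rule : Rule A 𝔸 r :=
    { head := ⟨n', idx ∘ ρ', R'⟩
      idb := some ⟨n, idx ∘ ρ, R⟩
      edb := (I.finite_atoms hr ω).toFinset.toList
      head_arity := hn'
      idb_arity := by simpa using hn
      edb_arity := fun a ha => hr _ ((hmem a).mp ha)
      edb_basic := fun a ha => hI _ ((hmem a).mp ha)
      nodup := nodup_toList _
      consistent := fun f hbody hf => (hiff f hf).mp (hbody _ rfl)
      mirror := by
        rintro _ ⟨⟩ f hhead hf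
        exact (hiff f hf).mpr hhead }
  refine hρ' ▸ Derives.step (I := I) rule ω ?_ fun a ha => (hmem a).mp ha
  rintro _ ⟨⟩
  change Derives 𝔸 r I (ω ∘ idx ∘ ρ) R
  rwa [hρ]

end Derives

/-- The relation that the property `P` of assignments defines on the tuple `ρ` of variables. -/
def tupleRel (ρ : Fin n → V) (P : (V → A) → Prop) : Set (Fin n → A) := {g | ∃ f, P f ∧ f ∘ ρ = g}

lemma comp_mem_tupleRel (hP : DependsOn P (Set.range ρ)) {f : V → A} :
    f ∘ ρ ∈ tupleRel ρ P ↔ P f := by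
  refine ⟨?_, fun hf => ⟨f, hf, rfl⟩⟩
  rintro ⟨g, hg, hgf⟩
  have hagree : ∀ i ∈ Set.range ρ, g i = f i := by
    rintro _ ⟨i, rfl⟩
    exact congrFun hgf i
  rwa [← hP hagree]

theorem Derivable.derives [Finite A] [Nonempty V] [NeZero r] (hP : Derivable I m P)
    (hI : IsCSPInstance 𝔸 I) (hr : ∀ c ∈ I.constraints, c.1 ≤ r) (hmr : 2 * m ≤ r) (hn : n ≤ m)
    (hρ : DependsOn P (Set.range ρ)) : Derives 𝔸 r I ρ (tupleRel ρ P) := by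
  classical
  induction hP generalizing n with
  | refl => exact .of_forall (by omega) fun f => (comp_mem_tupleRel hρ).mpr trivial
  | @tail P Q _ hstep ih =>
    obtain ⟨W, hW, hPW, -, hPQ⟩ := hstep
    let enum : Fin #W → V := Subtype.val ∘ W.equivFin.symm
    have henum : Set.range enum = W := by
      simp [enum, Set.range_comp]
    have hPenum : DependsOn P (Set.range enum) := henum ▸ hPW
    have hcard : #(W ∪ univ.image ρ) ≤ r := by
      have := card_union_le W (univ.image ρ)
      have := card_image_le (s := univ) (f := ρ)
      rw [card_fin] at this
      omega
    refine (ih hW hPenum).of_iff hI hr hcard (by omega) (by omega) ?_ ?_ fun f hf => ?_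
    · simp [henum]
    · simp
    · rw [comp_mem_tupleRel hPenum, comp_mem_tupleRel hρ]
      exact hPQ f (hf.mono (by simp))

lemma Derivable.derivesGoal [Finite A] [Nonempty V] [NeZero r] (h : Derivable I m fun _ => False)
    (hI : IsCSPInstance 𝔸 I) (hr : ∀ c ∈ I.constraints, c.1 ≤ r) (hmr : 2 * m ≤ r) :
    DerivesGoal 𝔸 r I := by
  have hempty : tupleRel (Fin.elim0 : Fin 0 → V) (fun _ : V → A => False) = ∅ := by
    simp [tupleRel]
  exact ⟨0, Fin.elim0, Nat.zero_le r, hempty ▸ h.derives hI hr hmr (Nat.zero_le m)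
    ((dependsOn_const False).mono (Set.empty_subset _))⟩

end SymmetricDatalog

section UnsatisfiablePaths

open PathInstance Finset

variable {A : Type} {𝔸 : RelStruct A} {I : PathInstance A} {n j : ℕ} {p : ℕ → A → A → A → A}
  {q : A → A → A → A}

lemma PreservesRel.pres3Set {S : Set A} (hq : PreservesRel (ternaryOp q) (unaryRel S)) :
    Pres3Set q S := fun x y z hx hy hz =>
  hq ![fun _ => x, fun _ => y, fun _ => z] (by simpa [Fin.forall_fin_succ] using ⟨hx, hy, hz⟩)

lemma PreservesRel.pres3Rel {E : Set (A × A)} (hq : PreservesRel (ternaryOp q) (pairRel E)) :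
    Pres3Rel q E := fun x y z hx hy hz =>
  hq ![![x.1, x.2], ![y.1, y.2], ![z.1, z.2]]
    (by simpa [Fin.forall_fin_succ] using ⟨hx, hy, hz⟩)

namespace PathInstance

lemma unary_mem_constraints (hj : 1 ≤ j) (hjI : j ≤ I.len) :
    (⟨1, fun _ => j, unaryRel (I.B j)⟩ : Σ n : ℕ, (Fin n → ℕ) × Set (Fin n → A)) ∈
      I.toInstance.constraints :=
  .inl ⟨j, hj, hjI, rfl⟩

lemma binary_mem_constraints (hj : 1 ≤ j) (hjI : j + 1 ≤ I.len) :
    (⟨2, ![j, j + 1], pairRel (I.E j)⟩ : Σ n : ℕ, (Fin n → ℕ) × Set (Fin n → A)) ∈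
      I.toInstance.constraints :=
  .inr ⟨j, hj, hjI, rfl⟩

lemma arity_le_two (I : PathInstance A) : ∀ c ∈ I.toInstance.constraints, c.1 ≤ 2 := by
  rintro _ (⟨j, -, -, rfl⟩ | ⟨j, -, -, rfl⟩) <;> simp

lemma preservedOn_of_isPolymorphism (hI : IsCSPInstance 𝔸 I.toInstance)
    (hq : IsPolymorphism 𝔸 (ternaryOp q)) : I.PreservedOn q 1 I.len :=
  ⟨fun _ hj hjI => (hq _ (hI _ (unary_mem_constraints hj hjI))).pres3Set,
    fun _ hj hjI => (hq _ (hI _ (binary_mem_constraints hj hjI))).pres3Rel⟩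

lemma isDerivedPath_toInstance (I : PathInstance A) :
    IsDerivedPath I.toInstance 1 id I 1 I.len := by
  refine ⟨fun j hj hjI => .single ⟨{j}, card_singleton j |>.le,
    (dependsOn_const True).mono (Set.empty_subset _),
    dependsOn_apply_mem (mem_coe.mpr (mem_singleton_self j)) _, fun f hf => ?_⟩,
    fun j hj hjI f hf => ?_⟩
  · exact iff_of_true trivial (hf _ (unary_mem_constraints hj hjI) (by simp))
  · exact hf _ (binary_mem_constraints hj hjI) (by simp [Set.pair_comm])

theorem derivable_false [Finite A] (hp : IsHMChain n p) (hI : ∀ k ≤ n, I.PreservedOn (p k) 1 I.len)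
    (hunsat : ¬∃ s, IsSolution I s) :
    Derivable I.toInstance (outerBound A 1) (fun _ => False) := by
  rcases isEmpty_or_nonempty A with hA | ⟨⟨x⟩⟩
  · have hconst : ∀ Q : Prop, DependsOn (fun _ : ℕ → A => Q) (∅ : Finset ℕ) := fun Q =>
      (dependsOn_const Q).mono (Set.empty_subset _)
    exact .single ⟨∅, by simp, hconst _, hconst _, fun f _ => hA.elim (f 0)⟩
  have hlen : 1 ≤ I.len := by
    by_contra hlen
    exact hunsat ⟨fun _ => x, fun _ _ _ => by omega, fun _ _ _ => by omega⟩
  have hempty : I.values 1 I.len I.len = ∅ :=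
    Set.eq_empty_of_forall_notMem fun _ ⟨s, hs, _⟩ => hunsat ⟨s, hs⟩
  simpa only [hempty, Set.mem_empty_iff_false] using
    I.isDerivedPath_toInstance.derivable_values hp hI le_rfl hlen le_rfl

end PathInstance

end UnsatisfiablePaths

theorem statement15_general (A : Type) [Finite A] :
    ∃ M : ℕ, ∀ (𝔸 : RelStruct A) (n : ℕ) (p : ℕ → A → A → A → A), IsHMChain n p →
      (∀ k ≤ n, IsPolymorphism 𝔸 (ternaryOp (p k))) →
      ∀ I : PathInstance A, IsCSPInstance 𝔸 I.toInstance →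
        (¬∃ f : ℕ → A, IsSolution I f) → DerivesGoal 𝔸 M I.toInstance := by
  refine ⟨2 * outerBound A 1 + 2, fun 𝔸 n p hp hpoly I hI hunsat => ?_⟩
  have hder : Derivable I.toInstance (outerBound A 1) (fun _ => False) :=
    PathInstance.derivable_false hp
      (fun k hk => PathInstance.preservedOn_of_isPolymorphism hI (hpoly k hk)) hunsat
  exact hder.derivesGoal hI (fun c hc => (I.arity_le_two c hc).trans (by omega)) (by omega)

/-- corollary: one bound per structure.
For each relational structure `𝔸` admitting a chain of `n` Hagemann–Mitschke
terms as polymorphisms there is an `M ∈ ℕ` such that `𝒫_𝔸^M(I) ⊢ G` for every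
unsatisfiable path instance `I` of `CSP(𝔸)`. -/
theorem statement15 {A : Type} [Finite A] (𝔸 : RelStruct A)
    (hfin : 𝔸.basic.Finite)
    (n : ℕ) (p : ℕ → A → A → A → A) (hp : IsHMChain n p)
    (hpoly : ∀ k ≤ n, IsPolymorphism 𝔸 (ternaryOp (p k))) :
    ∃ M : ℕ, ∀ I : PathInstance A, IsCSPInstance 𝔸 I.toInstance →
      (¬∃ f : ℕ → A, IsSolution I f) → DerivesGoal 𝔸 M I.toInstance := by
  obtain ⟨M, hM⟩ := statement15_general A
  exact ⟨M, hM 𝔸 n p hp hpoly⟩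

end CSPPaper
end
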